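/- arXiv:1506.05237 — 5 statements merged into one kernel-verified Lean document; each statement's English description precedes it below -/
import Mathlib

section
/- If a Banach space X is weak midpoint locally uniformly rotund and has the local diameter 2 property, then X has the diameter 2 property. -/
open Filter Topology

/-- The weak topology on a normed space `X`: the topology induced by all continuous
linear functionals on `X`. -/
noncomputable def weakTop (X : Type*) [NormedAddCommGroup X] [NormedSpace ℝ X] :
    TopologicalSpace X :=
  TopologicalSpace.induced (fun (x : X) (f : X →L[ℝ] ℝ) => f x) Pi.topologicalSpace

/-!
In a weak MLUR space, if the midpoints of two sequences in the unit ball converge in norm to a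
unit vector `x`, then both sequences converge weakly to `x`. Every point of a segment is the
midpoint of one of its endpoints and a third point of the segment. Hence, for two slices containing
`x`, the convex hull of their complements in the ball stays at positive distance from `x`, and
separating it from `x` gives a slice around `x` inside both. So the slices around `x` form a base of
its relative weak neighbourhoods (Choquet's lemma), and under the LD2P all of these have diameter 2.
This rules out finite dimension, and in infinite dimension every nonempty relatively weakly open
subset of the ball contains a unit vector.
-/

open Metric Set

theorem subset_image2_midpoint {R E : Type*} [Ring R] [Invertible (2 : R)] [AddCommGroup E]
    [Module R E] {s C : Set E} (hs : s ⊆ C) : s ⊆ image2 (midpoint R) s C :=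
  fun p hp => ⟨p, hp, p, hs hp, midpoint_self R p⟩

section Midpoint

variable {𝕜 E : Type*} [Field 𝕜] [LinearOrder 𝕜] [IsStrictOrderedRing 𝕜] [Invertible (2 : 𝕜)]
  [AddCommGroup E] [Module 𝕜 E] {s t C : Set E}

theorem exists_midpoint_eq_smul_add_smul_of_convex (hC : Convex 𝕜 C) {p q : E} (hp : p ∈ C)
    (hq : q ∈ C) {a b : 𝕜} (ha : 1 / 2 ≤ a) (hb : 0 ≤ b) (hab : a + b = 1) :
    ∃ r ∈ C, midpoint 𝕜 p r = a • p + b • q := by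
  refine ⟨(2 * a - 1) • p + (2 * b) • q, hC hp hq ?_ ?_ ?_, ?_⟩
  · linarith
  · linarith
  · linarith
  · rw [midpoint_eq_smul_add, invOf_eq_inv]
    module

theorem convexJoin_subset_image2_midpoint (hC : Convex 𝕜 C) (hs : s ⊆ C) (ht : t ⊆ C) :
    convexJoin 𝕜 s t ⊆ image2 (midpoint 𝕜) s C ∪ image2 (midpoint 𝕜) t C := by
  intro u hu
  obtain ⟨p, hp, q, hq, a, b, ha, hb, hab, rfl⟩ := mem_convexJoin.1 hu
  rcases le_total (1 / 2) a with h_half | h_half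
  · obtain ⟨r, hr, hpr⟩ :=
      exists_midpoint_eq_smul_add_smul_of_convex hC (hs hp) (ht hq) h_half hb hab
    exact .inl ⟨p, hp, r, hr, hpr⟩
  · obtain ⟨r, hr, hqr⟩ := exists_midpoint_eq_smul_add_smul_of_convex hC (ht hq) (hs hp)
      (by linarith : 1 / 2 ≤ b) ha (by linarith)
    exact .inr ⟨q, hq, r, hr, hqr.trans (add_comm _ _)⟩

theorem convexHull_union_subset_image2_midpoint (hC : Convex 𝕜 C) (hs : Convex 𝕜 s)
    (ht : Convex 𝕜 t) (hsC : s ⊆ C) (htC : t ⊆ C) :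
    convexHull 𝕜 (s ∪ t) ⊆ image2 (midpoint 𝕜) s C ∪ image2 (midpoint 𝕜) t C := by
  rcases s.eq_empty_or_nonempty with rfl | hs_ne
  · simpa [ht.convexHull_eq] using subset_image2_midpoint htC
  rcases t.eq_empty_or_nonempty with rfl | ht_ne
  · simpa [hs.convexHull_eq] using subset_image2_midpoint hsC
  rw [hs.convexHull_union ht hs_ne ht_ne]
  exact convexJoin_subset_image2_midpoint hC hsC htC

end Midpoint

theorem exists_ne_zero_forall_apply_eq_zero {K V ι : Type*} [DivisionRing K] [AddCommGroup V]
    [Module K V] [Finite ι] (hV : ¬ FiniteDimensional K V) (f : ι → V →ₗ[K] K) :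
    ∃ v ≠ 0, ∀ i, f i v = 0 := by
  have h_ker : LinearMap.ker (LinearMap.pi f) ≠ ⊥ := fun h =>
    hV (FiniteDimensional.of_injective (LinearMap.pi f) (LinearMap.ker_eq_bot.1 h))
  obtain ⟨v, hv, hv_ne⟩ := Submodule.exists_mem_ne_zero_of_ne_bot h_ker
  exact ⟨v, hv_ne, congrFun hv⟩

section NormedSpace

variable {X : Type*} [NormedAddCommGroup X] [NormedSpace ℝ X]

theorem exists_norm_add_smul_eq {x v : X} {r : ℝ} (hv : v ≠ 0) (hx : ‖x‖ ≤ r) :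
    ∃ t : ℝ, ‖x + t • v‖ = r := by
  have h_cont : Continuous fun t : ℝ => ‖x + t • v‖ := by fun_prop
  have hv_pos : 0 < ‖v‖ := norm_pos_iff.2 hv
  have h_far : r ≤ ‖x + (2 * r / ‖v‖) • v‖ := by
    have hr : 0 ≤ r := (norm_nonneg x).trans hx
    have h_norm : ‖(2 * r / ‖v‖) • v‖ = 2 * r := by
      rw [norm_smul, Real.norm_of_nonneg (by positivity), div_mul_cancel₀ _ hv_pos.ne']
    have h_triangle := norm_sub_le (x + (2 * r / ‖v‖) • v) x
    rw [add_sub_cancel_left, h_norm] at h_triangle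
    linarith
  exact mem_range_of_exists_le_of_exists_ge h_cont ⟨0, by simpa using hx⟩ ⟨_, h_far⟩

theorem nhds_weakTop (x : X) :
    @nhds X (weakTop X) x = ⨅ f : X →L[ℝ] ℝ, comap f (𝓝 (f x)) := by
  rw [weakTop, nhds_induced, nhds_pi, Filter.pi, comap_iInf]
  simp only [comap_comap]
  rfl

-- `weakTop X` is definitionally the topology of `WeakSpace ℝ X`.
theorem isOpen_weakTop_of_isOpen [FiniteDimensional ℝ X] {U : Set X} (hU : IsOpen U) :
    IsOpen[weakTop X] U :=
  have : FiniteDimensional ℝ (WeakSpace ℝ X) := (toWeakSpace ℝ X).finiteDimensional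
  hU.preimage (LinearMap.continuous_of_finiteDimensional (toWeakSpace ℝ X).symm.toLinearMap)

theorem exists_norm_eq_mem_of_isOpen_weakTop (hX : ¬ FiniteDimensional ℝ X) {V : Set X}
    (hV : IsOpen[weakTop X] V) {x : X} (hxV : x ∈ V) {r : ℝ} (hx : ‖x‖ ≤ r) :
    ∃ y ∈ V, ‖y‖ = r := by
  obtain ⟨U, hU, rfl⟩ := isOpen_induced_iff.1 hV
  obtain ⟨I, u, hu, hIU⟩ := isOpen_pi_iff.1 hU _ hxV
  obtain ⟨v, hv_ne, hv⟩ := exists_ne_zero_forall_apply_eq_zero hX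
    fun f : I => (f : X →L[ℝ] ℝ).toLinearMap
  obtain ⟨t, ht⟩ := exists_norm_add_smul_eq hv_ne hx
  refine ⟨x + t • v, hIU fun f hf => ?_, ht⟩
  have hfv : f v = 0 := hv ⟨f, hf⟩
  simpa [hfv] using (hu f hf).2

/-- The slice of the closed unit ball cut out by `c < f`. It is parametrized by the threshold `c`
itself and `f` need not have norm one, so `S(f, ε)` is `ballSlice f (1 - ε)`. -/
def ballSlice (f : X →L[ℝ] ℝ) (c : ℝ) : Set X := {x | ‖x‖ ≤ 1 ∧ f x > c}

/-- `x` is a unit vector at which the condition defining weak midpoint local uniform rotundity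
holds; `X` is weak MLUR when every unit vector is such a point. -/
structure IsWeakMLURPoint (x : X) : Prop where
  norm_eq_one : ‖x‖ = 1
  tendsto_apply (y : ℕ → X) : Tendsto (fun n => ‖x + y n‖) atTop (𝓝 1) →
    Tendsto (fun n => ‖x - y n‖) atTop (𝓝 1) →
    ∀ f : X →L[ℝ] ℝ, Tendsto (fun n => f (y n)) atTop (𝓝 0)

namespace IsWeakMLURPoint

variable {x : X}

theorem nontrivial (hx : IsWeakMLURPoint x) : Nontrivial X :=
  ⟨x, 0, norm_ne_zero_iff.1 (hx.norm_eq_one ▸ one_ne_zero)⟩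

theorem tendsto_apply_of_norm_le (hx : IsWeakMLURPoint x) {y : ℕ → X} {r : ℕ → ℝ}
    (hr : Tendsto r atTop (𝓝 1)) (h_add : ∀ n, ‖x + y n‖ ≤ r n) (h_sub : ∀ n, ‖x - y n‖ ≤ r n)
    (f : X →L[ℝ] ℝ) : Tendsto (fun n => f (y n)) atTop (𝓝 0) := by
  have h_two (n : ℕ) : 2 ≤ ‖x + y n‖ + ‖x - y n‖ := calc
    (2 : ℝ) = ‖(2 : ℝ) • x‖ := by rw [norm_smul, hx.norm_eq_one, Real.norm_two, mul_one]
    _ = ‖(x + y n) + (x - y n)‖ := by congr 1; module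
    _ ≤ ‖x + y n‖ + ‖x - y n‖ := norm_add_le _ _
  have h_lower : Tendsto (fun n => 2 - r n) atTop (𝓝 1) := by
    convert hr.const_sub 2
    norm_num
  refine hx.tendsto_apply y ?_ ?_ f
  · exact tendsto_of_tendsto_of_tendsto_of_le_of_le h_lower hr
      (fun n => by linarith [h_two n, h_sub n]) h_add
  · exact tendsto_of_tendsto_of_tendsto_of_le_of_le h_lower hr
      (fun n => by linarith [h_two n, h_add n]) h_sub

theorem tendsto_apply_of_tendsto_midpoint (hx : IsWeakMLURPoint x) {p q : ℕ → X}
    (hp : ∀ n, ‖p n‖ ≤ 1) (hq : ∀ n, ‖q n‖ ≤ 1)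
    (h_mid : Tendsto (fun n => midpoint ℝ (p n) (q n)) atTop (𝓝 x)) (f : X →L[ℝ] ℝ) :
    Tendsto (fun n => f (p n)) atTop (𝓝 (f x)) := by
  set m : ℕ → X := fun n => midpoint ℝ (p n) (q n) with hm
  have h_radius : Tendsto (fun n => ‖x - m n‖ + 1) atTop (𝓝 1) := by
    simpa using (h_mid.const_sub x).norm.add_const 1
  have h_add (n : ℕ) : ‖x + (p n - m n)‖ ≤ ‖x - m n‖ + 1 := calc
    ‖x + (p n - m n)‖ = ‖(x - m n) + p n‖ := by congr 1; abel
    _ ≤ ‖x - m n‖ + 1 := norm_add_le_of_le le_rfl (hp n)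
  have h_sub (n : ℕ) : ‖x - (p n - m n)‖ ≤ ‖x - m n‖ + 1 := calc
    ‖x - (p n - m n)‖ = ‖(x - m n) + q n‖ := by
      congr 1
      simp only [hm, midpoint_eq_smul_add, invOf_eq_inv]
      module
    _ ≤ ‖x - m n‖ + 1 := norm_add_le_of_le le_rfl (hq n)
  have h_diff := hx.tendsto_apply_of_norm_le h_radius h_add h_sub f
  simpa using h_diff.add ((f.continuous.tendsto x).comp h_mid)

theorem notMem_closure_image2_midpoint (hx : IsWeakMLURPoint x) {f : X →L[ℝ] ℝ} {c : ℝ}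
    (hc : c < f x) :
    x ∉ closure (image2 (midpoint ℝ) (closedBall 0 1 ∩ {y | f y ≤ c}) (closedBall 0 1)) := by
  intro h_mem
  obtain ⟨m, hm, hm_lim⟩ := mem_closure_iff_seq_limit.1 h_mem
  choose p hp q hq hpq using hm
  obtain rfl : (fun n => midpoint ℝ (p n) (q n)) = m := funext hpq
  have h_lim := hx.tendsto_apply_of_tendsto_midpoint
    (fun n => mem_closedBall_zero_iff.1 (hp n).1)
    (fun n => mem_closedBall_zero_iff.1 (hq n)) hm_lim f
  exact hc.not_ge (le_of_tendsto' h_lim fun n => (hp n).2)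

theorem exists_ballSlice_subset_inter (hx : IsWeakMLURPoint x) {f₁ f₂ : X →L[ℝ] ℝ} {c₁ c₂ : ℝ}
    (h₁ : c₁ < f₁ x) (h₂ : c₂ < f₂ x) :
    ∃ (g : X →L[ℝ] ℝ) (d : ℝ), d < g x ∧ ballSlice g d ⊆ ballSlice f₁ c₁ ∩ ballSlice f₂ c₂ := by
  set K₁ : Set X := closedBall 0 1 ∩ {y | f₁ y ≤ c₁}
  set K₂ : Set X := closedBall 0 1 ∩ {y | f₂ y ≤ c₂}
  have hK (f : X →L[ℝ] ℝ) (c : ℝ) : Convex ℝ (closedBall (0 : X) 1 ∩ {y | f y ≤ c}) :=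
    (convex_closedBall 0 1).inter (convex_halfSpace_le f.isLinear c)
  have hxK : x ∉ closure (convexHull ℝ (K₁ ∪ K₂)) := by
    have h_subset := closure_mono <| convexHull_union_subset_image2_midpoint
      (convex_closedBall (0 : X) 1) (hK f₁ c₁) (hK f₂ c₂) inter_subset_left inter_subset_left
    rw [closure_union] at h_subset
    exact fun h_mem => (h_subset h_mem).elim (hx.notMem_closure_image2_midpoint h₁)
      (hx.notMem_closure_image2_midpoint h₂)
  obtain ⟨g, d, hgK, hdx⟩ := geometric_hahn_banach_closed_point
    (convex_convexHull ℝ (K₁ ∪ K₂)).closure isClosed_closure hxK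
  have h_avoid {y : X} (hy : y ∈ ballSlice g d) : y ∉ K₁ ∪ K₂ := fun hyK =>
    hy.2.not_gt (hgK y (subset_closure (subset_convexHull ℝ _ hyK)))
  refine ⟨g, d, hdx, fun y hy => ⟨⟨hy.1, ?_⟩, ⟨hy.1, ?_⟩⟩⟩
  · exact not_le.1 fun hle => h_avoid hy (.inl ⟨mem_closedBall_zero_iff.2 hy.1, hle⟩)
  · exact not_le.1 fun hle => h_avoid hy (.inr ⟨mem_closedBall_zero_iff.2 hy.1, hle⟩)

theorem exists_ballSlice_subset_of_isOpen_weakTop (hx : IsWeakMLURPoint x) {V : Set X}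
    (hV : IsOpen[weakTop X] V) (hxV : x ∈ V) :
    ∃ (g : X →L[ℝ] ℝ) (d : ℝ), d < g x ∧ ballSlice g d ⊆ V := by
  have h_nhds : V ∈ @nhds X (weakTop X) x := @IsOpen.mem_nhds X (weakTop X) x V hV hxV
  rw [nhds_weakTop] at h_nhds
  refine iInf_sets_induct h_nhds ⟨0, -1, by simp, subset_univ _⟩ ?_
  rintro f s t hs ⟨g, d, hd, hgt⟩
  obtain ⟨U, hU, hUs⟩ := hs
  obtain ⟨a, b, ⟨ha, hb⟩, hab⟩ := mem_nhds_iff_exists_Ioo_subset.1 hU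
  obtain ⟨g₁, d₁, hd₁, hg₁⟩ := hx.exists_ballSlice_subset_inter ha hd
  obtain ⟨g₂, d₂, hd₂, hg₂⟩ :=
    hx.exists_ballSlice_subset_inter (f₁ := -f) (neg_lt_neg hb) hd₁
  refine ⟨g₂, d₂, hd₂, fun y hy => ?_⟩
  obtain ⟨hy_neg, hy₁⟩ := hg₂ hy
  obtain ⟨hy_pos, hyg⟩ := hg₁ hy₁
  exact ⟨hUs (hab ⟨hy_pos.2, neg_lt_neg_iff.1 hy_neg.2⟩), hgt hyg⟩

end IsWeakMLURPoint

/-- The local diameter 2 property (LD2P): every slice of the unit ball has diameter 2. Slices are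
taken in the normalized form `S(f, ε)` with `‖f‖ = 1`. -/
def LocalDiameterTwo (X : Type*) [NormedAddCommGroup X] [NormedSpace ℝ X] : Prop :=
  ∀ f : X →L[ℝ] ℝ, ‖f‖ = 1 → ∀ ε : ℝ, 0 < ε → diam (ballSlice f (1 - ε)) = 2

theorem ballSlice_inv_norm_smul {f : X →L[ℝ] ℝ} (hf : f ≠ 0) (c : ℝ) :
    ballSlice (‖f‖⁻¹ • f) (‖f‖⁻¹ * c) = ballSlice f c := by
  have hf_pos : 0 < ‖f‖⁻¹ := inv_pos.2 (norm_pos_iff.2 hf)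
  ext y
  exact and_congr_right' (mul_lt_mul_iff_right₀ hf_pos)

theorem LocalDiameterTwo.diam_ballSlice_eq_two [Nontrivial X] (hX : LocalDiameterTwo X)
    {f : X →L[ℝ] ℝ} {c : ℝ} (h_ne : (ballSlice f c).Nonempty) : diam (ballSlice f c) = 2 := by
  obtain ⟨x, hx, hcx⟩ := h_ne
  rcases eq_or_ne f 0 with rfl | hf
  · have h_ball : ballSlice (0 : X →L[ℝ] ℝ) c = closedBall 0 1 := by
      ext y
      exact (and_iff_left hcx).trans mem_closedBall_zero_iff.symm
    rw [h_ball, diam_closedBall_eq 0 zero_le_one, mul_one]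
  · have hf_pos : 0 < ‖f‖ := norm_pos_iff.2 hf
    have hc : c < ‖f‖ := calc
      c < f x := hcx
      _ ≤ ‖f x‖ := le_abs_self _
      _ ≤ ‖f‖ := f.unit_le_opNorm x hx
    have hε : 0 < 1 - ‖f‖⁻¹ * c := sub_pos.2 ((inv_mul_lt_one₀ hf_pos).2 hc)
    rw [← ballSlice_inv_norm_smul hf, ← sub_sub_cancel 1 (‖f‖⁻¹ * c)]
    exact hX _ (norm_smul_inv_norm hf) _ hε

theorem IsWeakMLURPoint.diam_inter_closedBall_eq_two {x : X} (hx : IsWeakMLURPoint x)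
    (hX : LocalDiameterTwo X) {V : Set X} (hV : IsOpen[weakTop X] V) (hxV : x ∈ V) :
    diam (V ∩ closedBall 0 1) = 2 := by
  have := hx.nontrivial
  obtain ⟨g, d, hd, hgV⟩ := hx.exists_ballSlice_subset_of_isOpen_weakTop hV hxV
  apply le_antisymm
  · calc
      diam (V ∩ closedBall 0 1) ≤ diam (closedBall (0 : X) 1) :=
        diam_mono inter_subset_right isBounded_closedBall
      _ = 2 := by rw [diam_closedBall_eq 0 zero_le_one, mul_one]
  · calc
      2 = diam (ballSlice g d) := (hX.diam_ballSlice_eq_two ⟨x, hx.norm_eq_one.le, hd⟩).symm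
      _ ≤ diam (V ∩ closedBall 0 1) :=
        diam_mono (fun y hy => ⟨hgV hy, mem_closedBall_zero_iff.2 hy.1⟩)
          (isBounded_closedBall.subset inter_subset_right)

theorem IsWeakMLURPoint.not_finiteDimensional {x : X} (hx : IsWeakMLURPoint x)
    (hX : LocalDiameterTwo X) : ¬ FiniteDimensional ℝ X := by
  intro h_fin
  have h_diam : (2 : ℝ) ≤ 2 * (1 / 2) := calc
    2 = diam (ball x (1 / 2) ∩ closedBall 0 1) :=
      (hx.diam_inter_closedBall_eq_two hX (isOpen_weakTop_of_isOpen isOpen_ball)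
        (mem_ball_self one_half_pos)).symm
    _ ≤ diam (ball x (1 / 2)) := diam_mono inter_subset_left isBounded_ball
    _ ≤ 2 * (1 / 2) := diam_ball one_half_pos.le
  norm_num at h_diam

end NormedSpace

theorem weakMLUR_LD2P_implies_D2P_general {X : Type*} [NormedAddCommGroup X] [NormedSpace ℝ X]
    [Nontrivial X]
    (hwMLUR : ∀ x : X, ‖x‖ = 1 → ∀ y : ℕ → X,
      Tendsto (fun n => ‖x + y n‖) atTop (𝓝 1) →
      Tendsto (fun n => ‖x - y n‖) atTop (𝓝 1) →
      ∀ f : X →L[ℝ] ℝ, Tendsto (fun n => f (y n)) atTop (𝓝 0))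
    (hLD2P : ∀ f : X →L[ℝ] ℝ, ‖f‖ = 1 → ∀ ε : ℝ, 0 < ε →
      Metric.diam {x : X | ‖x‖ ≤ 1 ∧ f x > 1 - ε} = 2) :
    ∀ W : Set X, W.Nonempty →
      (∃ V : Set X, IsOpen[weakTop X] V ∧ W = V ∩ {x : X | ‖x‖ ≤ 1}) →
      Metric.diam W = 2 := by
  rintro W ⟨x₀, hx₀⟩ ⟨V, hV, rfl⟩
  have h_point (x : X) (hx : ‖x‖ = 1) : IsWeakMLURPoint x := ⟨hx, hwMLUR x hx⟩
  obtain ⟨z, hz⟩ := exists_norm_eq X zero_le_one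
  have h_inf : ¬ FiniteDimensional ℝ X := (h_point z hz).not_finiteDimensional hLD2P
  obtain ⟨x, hxV, hx⟩ := exists_norm_eq_mem_of_isOpen_weakTop h_inf hV hx₀.1 hx₀.2
  simpa only [closedBall, dist_zero_right] using
    (h_point x hx).diam_inter_closedBall_eq_two hLD2P hV hxV

/-- If a Banach space `X` is weak midpoint locally uniformly rotund and has the local
diameter 2 property, then `X` has the diameter 2 property. -/
theorem weakMLUR_LD2P_implies_D2P {X : Type*} [NormedAddCommGroup X] [NormedSpace ℝ X]
    [CompleteSpace X] [Nontrivial X]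
    (hwMLUR : ∀ x : X, ‖x‖ = 1 → ∀ y : ℕ → X,
      Tendsto (fun n => ‖x + y n‖) atTop (𝓝 1) →
      Tendsto (fun n => ‖x - y n‖) atTop (𝓝 1) →
      ∀ f : X →L[ℝ] ℝ, Tendsto (fun n => f (y n)) atTop (𝓝 0))
    (hLD2P : ∀ f : X →L[ℝ] ℝ, ‖f‖ = 1 → ∀ ε : ℝ, 0 < ε →
      Metric.diam {x : X | ‖x‖ ≤ 1 ∧ f x > 1 - ε} = 2) :
    ∀ W : Set X, W.Nonempty →
      (∃ V : Set X, IsOpen[weakTop X] V ∧ W = V ∩ {x : X | ‖x‖ ≤ 1}) →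
      Metric.diam W = 2 :=
  weakMLUR_LD2P_implies_D2P_general hwMLUR hLD2P
end

section
/- There exists a Banach space X which is midpoint locally uniformly rotund, has the diameter 2 property, has the local diameter 2 property +, and such that for every δ > 0 there exists a finite convex combination of slices of the unit ball B_X with diameter less than δ. -/
open Filter Topology

/-!
Let `K` be the Cantor space and renorm `C(K)` by `(∑ V, w V ^ 2 * (sup_V |f|) ^ 2) ^ (1 / 2)`, where
`V` runs over the countably many clopen sets and the weights `w V` are positive and
square-summable. The space we want is the `ℓ²`-sum `X` of countably many copies of this space `Y`.

* `Y` is MLUR: if `‖f ± g n‖ → ‖f‖` in `Y`, then `sup_V |f ± g n| → sup_V |f|` for every `V`, and on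
  a clopen set `V` where `f` is nearly constant this forces `g n` to be small.
* In `Y`, flip the sign of `f` on disjoint clopen sets `U n` chosen so that each `U n` meets the set
  where `|f|` is nearly maximal in `V`, for finitely many prescribed `V`. The norm does not
  increase, the flipped functions converge weakly to `f`, and they lie at distance almost `2 * ‖f‖`
  from `f`. This gives both diameter two properties.
* MLUR and the sign-flipping property pass to `ℓ²`-sums, and averaging slices given by functionals
  on `n` different summands of `X` produces sets of diameter `O(1 / √n)`, up to a small error.
-/

open TopologicalSpace (Clopens)
open scoped lp Function ENNReal

section MidpointDefect

variable {X : Type*} [NormedAddCommGroup X]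

/-- The amount by which `‖·‖ ^ 2` exceeds its value at the midpoint `x` of the segment from
`x - y` to `x + y`. In a Hilbert space this is `‖y‖ ^ 2`; its virtue is that it is additive over
`ℓ²`-sums. -/
noncomputable def midpointDefect (x y : X) : ℝ :=
  (‖x + y‖ ^ 2 + ‖x - y‖ ^ 2) / 2 - ‖x‖ ^ 2

lemma midpointDefect_neg_right (x y : X) : midpointDefect x (-y) = midpointDefect x y := by
  simp only [midpointDefect, sub_neg_eq_add, ← sub_eq_add_neg, add_comm]

variable [NormedSpace ℝ X]

lemma midpointDefect_smul (c : ℝ) (x y : X) :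
    midpointDefect (c • x) (c • y) = c ^ 2 * midpointDefect x y := by
  simp only [midpointDefect, ← smul_add, ← smul_sub, norm_smul, mul_pow, Real.norm_eq_abs, sq_abs]
  ring

lemma two_mul_norm_le_norm_add_add_norm_sub (x y : X) : 2 * ‖x‖ ≤ ‖x + y‖ + ‖x - y‖ :=
  calc
    2 * ‖x‖ = ‖(x + y) + (x - y)‖ := by
      rw [add_add_sub_cancel, ← two_smul ℝ, norm_smul, Real.norm_two]
    _ ≤ ‖x + y‖ + ‖x - y‖ := norm_add_le _ _

lemma sq_norm_add_sub_norm_le (x y : X) : (‖x + y‖ - ‖x‖) ^ 2 ≤ 2 * midpointDefect x y := by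
  have h := two_mul_norm_le_norm_add_add_norm_sub x y
  unfold midpointDefect
  nlinarith [norm_nonneg x, sq_nonneg (‖x - y‖ - ‖x‖)]

lemma midpointDefect_nonneg (x y : X) : 0 ≤ midpointDefect x y := by
  linarith [sq_norm_add_sub_norm_le x y, sq_nonneg (‖x + y‖ - ‖x‖)]

lemma sq_norm_le_midpointDefect_add (x y : X) : ‖y‖ ^ 2 ≤ midpointDefect x y + ‖x‖ ^ 2 := by
  have h := two_mul_norm_le_norm_add_add_norm_sub y x
  rw [norm_sub_rev, add_comm y] at h
  unfold midpointDefect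
  nlinarith [norm_nonneg y, sq_nonneg (‖x + y‖ - ‖x - y‖)]

lemma tendsto_norm_add_of_tendsto_midpointDefect {α : Type*} {l : Filter α} {x : X} {y : α → X}
    (h : Tendsto (fun a => midpointDefect x (y a)) l (𝓝 0)) :
    Tendsto (fun a => ‖x + y a‖) l (𝓝 ‖x‖) := by
  have hsq : Tendsto (fun a => (‖x + y a‖ - ‖x‖) ^ 2) l (𝓝 0) :=
    squeeze_zero (fun _ => sq_nonneg _) (fun a => sq_norm_add_sub_norm_le x (y a))
      (by simpa using h.const_mul 2)
  have hsub : Tendsto (fun a => ‖x + y a‖ - ‖x‖) l (𝓝 0) :=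
    (tendsto_zero_iff_abs_tendsto_zero _).2
      (by simpa [Function.comp_def, Real.sqrt_sq_eq_abs] using hsq.sqrt)
  simpa using hsub.add_const ‖x‖

lemma tendsto_norm_sub_of_tendsto_midpointDefect {α : Type*} {l : Filter α} {x : X} {y : α → X}
    (h : Tendsto (fun a => midpointDefect x (y a)) l (𝓝 0)) :
    Tendsto (fun a => ‖x - y a‖) l (𝓝 ‖x‖) := by
  simp only [← midpointDefect_neg_right x (y _)] at h
  simpa only [sub_eq_add_neg] using tendsto_norm_add_of_tendsto_midpointDefect h

lemma tendsto_midpointDefect_of_smul {α : Type*} {l : Filter α} {c : ℝ} (hc : c ≠ 0) {x : X}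
    {y : α → X} (h : Tendsto (fun a => midpointDefect (c • x) (c • y a)) l (𝓝 0)) :
    Tendsto (fun a => midpointDefect x (y a)) l (𝓝 0) := by
  simp only [midpointDefect_smul] at h
  have hmul := h.const_mul (c ^ 2)⁻¹
  rw [mul_zero] at hmul
  exact hmul.congr fun a => inv_mul_cancel_left₀ (pow_ne_zero 2 hc) _

end MidpointDefect

section MLUR

/-- Midpoint local uniform rotundity. The condition is imposed at every point `x`, not only at unit
vectors; by homogeneity this is equivalent for `x ≠ 0`, and it is automatic for `x = 0`. -/
def IsMLUR (X : Type*) [NormedAddCommGroup X] : Prop :=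
  ∀ (x : X) (y : ℕ → X), Tendsto (fun n => ‖x + y n‖) atTop (𝓝 ‖x‖) →
    Tendsto (fun n => ‖x - y n‖) atTop (𝓝 ‖x‖) → Tendsto y atTop (𝓝 0)

lemma isMLUR_iff_midpointDefect {X : Type*} [NormedAddCommGroup X] [NormedSpace ℝ X] :
    IsMLUR X ↔ ∀ (x : X) (y : ℕ → X),
      Tendsto (fun n => midpointDefect x (y n)) atTop (𝓝 0) → Tendsto y atTop (𝓝 0) := by
  refine forall₂_congr fun x y => ⟨fun h hd => ?_, fun h hadd hsub => h ?_⟩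
  · exact h (tendsto_norm_add_of_tendsto_midpointDefect hd)
      (tendsto_norm_sub_of_tendsto_midpointDefect hd)
  · have hzero : (‖x‖ ^ 2 + ‖x‖ ^ 2) / 2 - ‖x‖ ^ 2 = 0 := by ring
    rw [← hzero]
    exact (((hadd.pow 2).add (hsub.pow 2)).div_const 2).sub_const (‖x‖ ^ 2)

end MLUR

section LpSum

variable {ι : Type*} {E : ι → Type*} [∀ i, NormedAddCommGroup (E i)]

lemma hasSum_sq_norm (x : lp E 2) : HasSum (fun i => ‖x i‖ ^ 2) (‖x‖ ^ 2) := by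
  simpa using lp.hasSum_norm (p := 2) (by norm_num) x

lemma hasSum_midpointDefect (x y : lp E 2) :
    HasSum (fun i => midpointDefect (x i) (y i)) (midpointDefect x y) :=
  (((hasSum_sq_norm (x + y)).add (hasSum_sq_norm (x - y))).div_const 2).sub (hasSum_sq_norm x)

variable [∀ i, NormedSpace ℝ (E i)]

lemma tendsto_midpointDefect_apply {α : Type*} {l : Filter α} {x : lp E 2} {y : α → lp E 2}
    (h : Tendsto (fun a => midpointDefect x (y a)) l (𝓝 0)) (i : ι) :
    Tendsto (fun a => midpointDefect (x i) (y a i)) l (𝓝 0) :=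
  squeeze_zero (fun _ => midpointDefect_nonneg _ _)
    (fun a => le_hasSum (hasSum_midpointDefect x (y a)) i fun _ _ => midpointDefect_nonneg _ _) h

-- `‖y n i‖ ^ 2` need not be dominated by a summable function of `i`, but its excess over the
-- defect, whose sum tends to zero, is dominated by `‖x i‖ ^ 2`.
lemma tendsto_zero_of_tendsto_midpointDefect_of_tendsto_apply {x : lp E 2} {y : ℕ → lp E 2}
    (hd : Tendsto (fun n => midpointDefect x (y n)) atTop (𝓝 0))
    (hy : ∀ i, Tendsto (fun n => y n i) atTop (𝓝 0)) : Tendsto y atTop (𝓝 0) := by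
  let excess (n : ℕ) (i : ι) : ℝ := max (‖y n i‖ ^ 2 - midpointDefect (x i) (y n i)) 0
  have excess_nonneg (n i) : 0 ≤ excess n i := le_max_right _ _
  have excess_le_y (n i) : excess n i ≤ ‖y n i‖ ^ 2 :=
    max_le (sub_le_self _ (midpointDefect_nonneg _ _)) (by positivity)
  have excess_le_x (n i) : excess n i ≤ ‖x i‖ ^ 2 :=
    max_le (sub_le_iff_le_add'.2 (sq_norm_le_midpointDefect_add _ _)) (by positivity)
  have excess_tendsto : Tendsto (fun n => ∑' i, excess n i) atTop (𝓝 0) := by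
    rw [← tsum_zero (α := ℝ) (β := ι)]
    refine tendsto_tsum_of_dominated_convergence (hasSum_sq_norm x).summable (fun i => ?_)
      (Eventually.of_forall fun n i => ?_)
    · exact squeeze_zero (fun n => excess_nonneg n i) (fun n => excess_le_y n i)
        (by simpa using (hy i).norm.pow 2)
    · rw [Real.norm_of_nonneg (excess_nonneg n i)]
      exact excess_le_x n i
  have sq_norm_le (n) : ‖y n‖ ^ 2 ≤ (∑' i, excess n i) + midpointDefect x (y n) := by
    have hsummable : Summable (excess n) :=
      (hasSum_sq_norm (y n)).summable.of_nonneg_of_le (excess_nonneg n) (excess_le_y n)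
    refine hasSum_le (fun i => ?_) (hasSum_sq_norm (y n))
      (hsummable.hasSum.add (hasSum_midpointDefect x (y n)))
    exact sub_le_iff_le_add.1 (le_max_left _ _)
  have hsq : Tendsto (fun n => ‖y n‖ ^ 2) atTop (𝓝 0) :=
    squeeze_zero (fun _ => by positivity) sq_norm_le (by simpa using excess_tendsto.add hd)
  exact tendsto_zero_iff_norm_tendsto_zero.2 (by simpa using hsq.sqrt)

theorem isMLUR_lp (h : ∀ i, IsMLUR (E i)) : IsMLUR (lp E 2) :=
  isMLUR_iff_midpointDefect.2 fun _ _ hd =>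
    tendsto_zero_of_tendsto_midpointDefect_of_tendsto_apply hd fun i =>
      isMLUR_iff_midpointDefect.1 (h i) _ _ (tendsto_midpointDefect_apply hd i)

end LpSum

section WeaklyNull

variable {X : Type*} [NormedAddCommGroup X] [NormedSpace ℝ X]

/-- The sequence `z` converges to zero in the weak topology. -/
def IsWeaklyNull (z : ℕ → X) : Prop :=
  ∀ φ : X →L[ℝ] ℝ, Tendsto (fun n => φ (z n)) atTop (𝓝 0)

lemma IsWeaklyNull.map {Y : Type*} [NormedAddCommGroup Y] [NormedSpace ℝ Y] {z : ℕ → X}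
    (hz : IsWeaklyNull z) (T : X →L[ℝ] Y) : IsWeaklyNull fun n => T (z n) :=
  fun φ => hz (φ.comp T)

lemma IsWeaklyNull.sum {ι : Type*} {z : ι → ℕ → X} (s : Finset ι)
    (hz : ∀ i ∈ s, IsWeaklyNull (z i)) : IsWeaklyNull fun n => ∑ i ∈ s, z i n := fun φ => by
  simpa using tendsto_finsetSum s fun i hi => hz i hi φ

lemma IsWeaklyNull.smul_of_abs_le {z : ℕ → X} (hz : IsWeaklyNull z) {t : ℕ → ℝ} {C : ℝ}
    (ht : ∀ n, |t n| ≤ C) : IsWeaklyNull fun n => t n • z n := fun φ => by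
  simp only [map_smul, smul_eq_mul]
  exact isBoundedUnder_le_mul_tendsto_zero (isBoundedUnder_of ⟨C, ht⟩) (hz φ)

lemma IsWeaklyNull.eventually_add_mem {z : ℕ → X} (hz : IsWeaklyNull z) {V : Set X}
    (hV : IsOpen[weakTop X] V) {x : X} (hx : x ∈ V) : ∀ᶠ n in atTop, x + z n ∈ V := by
  obtain ⟨U, hU, rfl⟩ := isOpen_induced_iff.1 hV
  have htendsto : Tendsto (fun n (φ : X →L[ℝ] ℝ) => φ (x + z n)) atTop (𝓝 fun φ => φ x) :=
    tendsto_pi_nhds.2 fun φ => by simpa using (hz φ).const_add (φ x)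
  exact htendsto.eventually_mem (hU.mem_nhds hx)

-- Testing a functional on sums with signs chosen to match shows that it is summable along `z`.
lemma isWeaklyNull_of_norm_sum_smul_le {z : ℕ → X} {C : ℝ}
    (h : ∀ (s : Finset ℕ) (ε : ℕ → ℝ), (∀ k, |ε k| ≤ 1) → ‖∑ k ∈ s, ε k • z k‖ ≤ C) :
    IsWeaklyNull z := by
  intro φ
  have habs_sign (r : ℝ) : |(SignType.sign r : ℝ)| ≤ 1 := by
    rcases lt_trichotomy r 0 with hr | rfl | hr <;> simp [*]
  have hbound (s : Finset ℕ) : ∑ k ∈ s, |φ (z k)| ≤ ‖φ‖ * C :=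
    calc
      ∑ k ∈ s, |φ (z k)| = φ (∑ k ∈ s, (SignType.sign (φ (z k)) : ℝ) • z k) := by
        simp only [map_sum, map_smul, smul_eq_mul, sign_mul_self]
      _ ≤ ‖φ‖ * ‖∑ k ∈ s, (SignType.sign (φ (z k)) : ℝ) • z k‖ :=
        (le_abs_self _).trans (φ.le_opNorm _)
      _ ≤ ‖φ‖ * C := by gcongr; exact h s _ fun k => habs_sign _
  exact (tendsto_zero_iff_abs_tendsto_zero _).2
    (summable_of_sum_le (fun _ => abs_nonneg _) hbound).tendsto_atTop_zero

end WeaklyNull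

section DiametralDiameterTwo

/-- A sequential, homogeneous form of the diametral diameter two property: every ball
`{y | ‖y‖ ≤ ‖x‖}` contains sequences `x - z n` converging weakly to `x` whose distance to `x` is
almost the diameter `2 * ‖x‖` of the ball. -/
def HasSeqDD2P (X : Type*) [NormedAddCommGroup X] [NormedSpace ℝ X] : Prop :=
  ∀ (x : X) (θ : ℝ), θ < 2 →
    ∃ z : ℕ → X, IsWeaklyNull z ∧ ∀ n, ‖x - z n‖ ≤ ‖x‖ ∧ θ * ‖x‖ ≤ ‖z n‖

variable {X : Type*} [NormedAddCommGroup X] [NormedSpace ℝ X]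

lemma HasSeqDD2P.exists_norm_eq_one_mem [Nontrivial X] (hX : HasSeqDD2P X) {V : Set X}
    (hV : IsOpen[weakTop X] V) {x : X} (hxV : x ∈ V) (hx : ‖x‖ ≤ 1) : ∃ u ∈ V, ‖u‖ = 1 := by
  obtain ⟨e, he⟩ := exists_norm_eq X (c := 2) (by norm_num)
  obtain ⟨z, hz, hzle⟩ := hX e 1 (by norm_num)
  have hfar (n : ℕ) : 1 ≤ ‖x + z n‖ := by
    have htri : ‖z n‖ ≤ ‖x + z n‖ + ‖x‖ := norm_le_add_norm_add' _ _
    linarith [(hzle n).2]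
  have hsphere (n : ℕ) : ∃ t ∈ Set.Icc (0 : ℝ) 1, ‖x + t • z n‖ = 1 :=
    intermediate_value_Icc (f := fun t : ℝ => ‖x + t • z n‖) zero_le_one (by fun_prop)
      ⟨by simpa using hx, by simpa using hfar n⟩
  choose t ht htone using hsphere
  have htz : IsWeaklyNull fun n => t n • z n :=
    hz.smul_of_abs_le fun n => (abs_of_nonneg (ht n).1).trans_le (ht n).2
  obtain ⟨n, hn⟩ := (htz.eventually_add_mem hV hxV).exists
  exact ⟨_, hn, htone n⟩

theorem HasSeqDD2P.diam_eq_two [Nontrivial X] (hX : HasSeqDD2P X) {V : Set X}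
    (hV : IsOpen[weakTop X] V) (hne : (V ∩ {x | ‖x‖ ≤ 1}).Nonempty) :
    Metric.diam (V ∩ {x | ‖x‖ ≤ 1}) = 2 := by
  obtain ⟨x, hxV, hx⟩ := hne
  obtain ⟨u, huV, hu⟩ := hX.exists_norm_eq_one_mem hV hxV hx
  have hsub : V ∩ {x | ‖x‖ ≤ 1} ⊆ Metric.closedBall 0 1 := fun y hy => by simpa using hy.2
  refine le_antisymm ?_ (le_of_forall_lt fun θ hθ => ?_)
  · calc
      Metric.diam (V ∩ {x | ‖x‖ ≤ 1}) ≤ Metric.diam (Metric.closedBall (0 : X) 1) :=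
        Metric.diam_mono hsub Metric.isBounded_closedBall
      _ ≤ 2 * 1 := Metric.diam_closedBall zero_le_one
      _ = 2 := mul_one 2
  · obtain ⟨η, hθη, hη⟩ := exists_between hθ
    obtain ⟨z, hz, hzle⟩ := hX u η hη
    obtain ⟨n, hn⟩ := ((hz.map (-ContinuousLinearMap.id ℝ X)).eventually_add_mem hV huV).exists
    have hmem : u - z n ∈ V ∩ {x | ‖x‖ ≤ 1} :=
      ⟨by simpa [sub_eq_add_neg] using hn, (hzle n).1.trans hu.le⟩
    calc
      θ < η := hθη
      _ ≤ ‖z n‖ := by simpa [hu] using (hzle n).2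
      _ = dist u (u - z n) := by simp
      _ ≤ Metric.diam (V ∩ {x | ‖x‖ ≤ 1}) :=
        Metric.dist_le_diam_of_mem (Metric.isBounded_closedBall.subset hsub) ⟨huV, hu.le⟩ hmem

theorem HasSeqDD2P.exists_mem_slice_lt_norm_sub (hX : HasSeqDD2P X) (φ : X →L[ℝ] ℝ) {c δ : ℝ}
    (hδ : 0 < δ) {x : X} (hx : ‖x‖ = 1) (hφx : c < φ x) :
    ∃ y, ‖y‖ ≤ 1 ∧ c < φ y ∧ 2 - δ < ‖x - y‖ := by
  obtain ⟨z, hz, hzle⟩ := hX x (2 - δ / 2) (by linarith)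
  have htendsto : Tendsto (fun n => φ (x - z n)) atTop (𝓝 (φ x)) := by
    simpa using (hz φ).const_sub (φ x)
  obtain ⟨n, hn⟩ := (htendsto.eventually (lt_mem_nhds hφx)).exists
  refine ⟨x - z n, (hzle n).1.trans hx.le, hn, ?_⟩
  have := (hzle n).2
  rw [hx] at this
  rw [sub_sub_cancel]
  linarith

end DiametralDiameterTwo

section LpSumDiametral

variable {ι : Type*} {E : ι → Type*} [∀ i, NormedAddCommGroup (E i)] {p : ℝ≥0∞}

lemma nontrivial_lp [Fact (1 ≤ p)] [Nonempty ι] [∀ i, Nontrivial (E i)] : Nontrivial (lp E p) := by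
  classical
  exact (lp.isometry_single (Classical.arbitrary ι)).injective.nontrivial

open scoped Classical in
lemma sum_single_apply (s : Finset ι) (a : ∀ i, E i) (i : ι) :
    (∑ j ∈ s, lp.single p j (a j) : lp E p) i = if i ∈ s then a i else 0 := by
  simp only [lp.coeFn_sum, Finset.sum_apply, lp.coeFn_single, Finset.sum_pi_single]

variable [∀ i, NormedSpace ℝ (E i)] [Fact (1 ≤ p)]

open scoped Classical in
lemma exists_finset_mul_norm_le (hp : p ≠ ∞) (x : lp E p) {a b : ℝ} (hab : a < b) :
    ∃ s : Finset ι, ∀ y : lp E p, (∀ i ∈ s, b * ‖x i‖ ≤ ‖y i‖) → a * ‖x‖ ≤ ‖y‖ := by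
  rcases le_or_gt (a * ‖x‖) 0 with hle | hpos
  · exact ⟨∅, fun y _ => hle.trans (norm_nonneg y)⟩
  have ha : 0 < a := pos_of_mul_pos_left hpos (norm_nonneg x)
  have hb : 0 < b := ha.trans hab
  have hx : 0 < ‖x‖ := pos_of_mul_pos_right hpos ha.le
  have htendsto : Tendsto (fun s : Finset ι => b * ‖∑ i ∈ s, lp.single p i (x i)‖) atTop
      (𝓝 (b * ‖x‖)) := (lp.hasSum_single hp x).norm.const_mul b
  obtain ⟨s, hs⟩ := (htendsto.eventually (lt_mem_nhds (mul_lt_mul_of_pos_right hab hx))).exists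
  refine ⟨s, fun y hy => hs.le.trans ?_⟩
  rw [← Real.norm_of_nonneg hb.le, ← norm_smul]
  refine lp.norm_mono (zero_lt_one.trans_le Fact.out).ne' fun i => ?_
  rw [lp.coeFn_smul, Pi.smul_apply, sum_single_apply, norm_smul, Real.norm_of_nonneg hb.le]
  split_ifs with hi
  · exact hy i hi
  · simp

open scoped Classical in
theorem hasSeqDD2P_lp (hp : p ≠ ∞) (h : ∀ i, HasSeqDD2P (E i)) : HasSeqDD2P (lp E p) := by
  intro x θ hθ
  obtain ⟨η, hθη, hη⟩ := exists_between hθ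
  obtain ⟨s, hs⟩ := exists_finset_mul_norm_le hp x hθη
  choose z hz hzle using fun i => h i (x i) η hη
  refine ⟨fun n => ∑ i ∈ s, lp.single p i (z i n),
    .sum s fun i _ => (hz i).map (lp.singleContinuousLinearMap ℝ E p i), fun n => ⟨?_, ?_⟩⟩
  · refine lp.norm_mono (zero_lt_one.trans_le Fact.out).ne' fun i => ?_
    rw [lp.coeFn_sub, Pi.sub_apply, sum_single_apply]
    split_ifs
    · exact (hzle i n).1
    · rw [sub_zero]
  · refine hs _ fun i hi => ?_
    rw [sum_single_apply, if_pos hi]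
    exact (hzle i n).2

end LpSumDiametral

section LpSumSlices

variable {ι : Type*} {E : ι → Type*} [∀ i, NormedAddCommGroup (E i)]

open scoped Classical in
lemma norm_sub_single_le {y : lp E 2} {i : ι} {r : ℝ} (hr : 0 ≤ r) (hy : ‖y‖ ≤ 1)
    (hyi : 1 - r ^ 2 / 2 ≤ ‖y i‖) : ‖y - lp.single 2 i (y i)‖ ≤ r := by
  have hsq : ‖y - lp.single 2 i (y i)‖ ^ 2 = ‖y‖ ^ 2 - ‖y i‖ ^ 2 := by
    simpa using lp.norm_compl_sum_single (p := 2) (by norm_num) y {i}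
  refine abs_le_of_sq_le_sq' ?_ hr |>.2
  nlinarith [norm_nonneg (y i), lp.norm_apply_le_norm two_ne_zero y i]

open scoped Classical in
lemma norm_sum_le_sqrt_card_add {s : Finset ι} {y : ι → lp E 2} {r : ℝ} (hr : 0 ≤ r)
    (hy : ∀ i ∈ s, ‖y i‖ ≤ 1) (hyi : ∀ i ∈ s, 1 - r ^ 2 / 2 ≤ ‖y i i‖) :
    ‖∑ i ∈ s, y i‖ ≤ √s.card + s.card * r := by
  have hdiag : ‖∑ i ∈ s, lp.single 2 i (y i i)‖ ≤ √s.card := by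
    have hsq : ‖∑ i ∈ s, lp.single 2 i (y i i)‖ ^ 2 = ∑ i ∈ s, ‖y i i‖ ^ 2 := by
      simpa using lp.norm_sum_single (p := 2) (by norm_num) (fun i => y i i) s
    refine Real.le_sqrt_of_sq_le (hsq.trans_le ?_)
    refine (Finset.sum_le_card_nsmul s _ 1 fun i hi => ?_).trans_eq (by simp)
    exact pow_le_one₀ (norm_nonneg _)
      ((lp.norm_apply_le_norm two_ne_zero (y i) i).trans (hy i hi))
  have hrest : ‖∑ i ∈ s, (y i - lp.single 2 i (y i i))‖ ≤ s.card * r := by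
    simpa using norm_sum_le_of_le s fun i hi => norm_sub_single_le hr (hy i hi) (hyi i hi)
  calc
    ‖∑ i ∈ s, y i‖ = ‖∑ i ∈ s, lp.single 2 i (y i i) + ∑ i ∈ s, (y i - lp.single 2 i (y i i))‖ := by
      rw [← Finset.sum_add_distrib]
      simp only [add_sub_cancel]
    _ ≤ √s.card + s.card * r := norm_add_le_of_le hdiag hrest

lemma norm_sum_embedding_le {n : ℕ} (e : Fin n ↪ ι) {y : Fin n → lp E 2} {r : ℝ} (hr : 0 ≤ r)
    (hy : ∀ j, ‖y j‖ ≤ 1) (hyi : ∀ j, 1 - r ^ 2 / 2 ≤ ‖y j (e j)‖) :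
    ‖∑ j, y j‖ ≤ √n + n * r := by
  have hextend (j) : Function.extend e y 0 (e j) = y j := e.injective.extend_apply y 0 j
  have h := norm_sum_le_sqrt_card_add (s := Finset.univ.map e) (y := Function.extend e y 0) hr
    (by simpa [hextend] using hy) (by simpa [hextend] using hyi)
  simpa [hextend] using h

variable [∀ i, NormedSpace ℝ (E i)]

lemma norm_comp_evalCLM {p : ℝ≥0∞} [Fact (1 ≤ p)] (i : ι) (g : E i →L[ℝ] ℝ) :
    ‖g.comp (lp.evalCLM ℝ E p i)‖ = ‖g‖ := by
  classical
  have hp : 0 < p := zero_lt_one.trans_le Fact.out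
  refine le_antisymm ?_ (g.opNorm_le_bound (norm_nonneg _) fun a => ?_)
  · refine ContinuousLinearMap.opNorm_le_bound _ (norm_nonneg _) fun y => ?_
    exact g.le_opNorm_of_le (lp.norm_apply_le_norm hp.ne' y i)
  · have happly : g.comp (lp.evalCLM ℝ E p i) (lp.single p i a) = g a :=
      congrArg g (lp.single_apply_self p i a)
    simpa [lp.norm_single hp, -ContinuousLinearMap.comp_apply, happly]
      using (g.comp (lp.evalCLM ℝ E p i)).le_opNorm (lp.single p i a)

lemma exists_nat_pos_sqrt_le_mul {r : ℝ} (hr : 0 < r) : ∃ n : ℕ, 0 < n ∧ √n ≤ n * r := by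
  obtain ⟨n, hn⟩ := exists_nat_gt (r⁻¹ ^ 2)
  refine ⟨n, Nat.cast_pos.1 ((by positivity : (0 : ℝ) < r⁻¹ ^ 2).trans hn), ?_⟩
  calc
    √n = √n * (r⁻¹ * r) := by rw [inv_mul_cancel₀ hr.ne', mul_one]
    _ ≤ √n * (√n * r) := by gcongr; exact Real.le_sqrt_of_sq_le hn.le
    _ = n * r := by rw [← mul_assoc, Real.mul_self_sqrt n.cast_nonneg]

theorem exists_diam_convexComb_slices_lt [Infinite ι] [∀ i, Nontrivial (E i)] {δ : ℝ}
    (hδ : 0 < δ) :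
    ∃ (n : ℕ) (f : Fin n → (lp E 2 →L[ℝ] ℝ)) (ε lam : Fin n → ℝ),
      0 < n ∧ (∀ j, ‖f j‖ = 1) ∧ (∀ j, 0 < ε j) ∧ (∀ j, 0 ≤ lam j) ∧ ∑ j, lam j = 1 ∧
      Metric.diam {w | ∃ y : Fin n → lp E 2,
        (∀ j, ‖y j‖ ≤ 1 ∧ f j (y j) > 1 - ε j) ∧ w = ∑ j, lam j • y j} < δ := by
  obtain ⟨r, hr, hrδ⟩ : ∃ r, 0 < r ∧ 4 * r < δ := ⟨δ / 8, by linarith, by linarith⟩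
  obtain ⟨n, hnpos, hsqrt⟩ := exists_nat_pos_sqrt_le_mul hr
  let e : Fin n ↪ ι := Fin.valEmbedding.trans (Infinite.natEmbedding ι)
  choose g hg _ using fun i => exists_dual_vector' ℝ (0 : E i)
  refine ⟨n, fun j => (g (e j)).comp (lp.evalCLM ℝ E 2 (e j)), fun _ => r ^ 2 / 2,
    fun _ => (n : ℝ)⁻¹, hnpos, fun j => (norm_comp_evalCLM _ _).trans (hg _),
    fun _ => by positivity, fun _ => by positivity, by simp [hnpos.ne'], ?_⟩
  have hsub : {w | ∃ y : Fin n → lp E 2,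
      (∀ j, ‖y j‖ ≤ 1 ∧ (g (e j)).comp (lp.evalCLM ℝ E 2 (e j)) (y j) > 1 - r ^ 2 / 2) ∧
        w = ∑ j, (n : ℝ)⁻¹ • y j} ⊆ Metric.closedBall 0 (2 * r) := by
    rintro _ ⟨y, hy, rfl⟩
    have hcoord (j) : 1 - r ^ 2 / 2 ≤ ‖y j (e j)‖ := by
      have := (g (e j)).le_opNorm (y j (e j))
      rw [hg, one_mul] at this
      exact (hy j).2.le.trans ((le_abs_self _).trans this)
    rw [mem_closedBall_zero_iff, ← Finset.smul_sum, norm_smul, norm_inv, Real.norm_natCast,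
      inv_mul_le_iff₀ (by positivity)]
    linarith [norm_sum_embedding_le e hr.le (fun j => (hy j).1) hcoord]
  calc
    _ ≤ Metric.diam (Metric.closedBall (0 : lp E 2) (2 * r)) :=
      Metric.diam_mono hsub Metric.isBounded_closedBall
    _ ≤ 2 * (2 * r) := Metric.diam_closedBall (by positivity)
    _ < δ := by linarith

end LpSumSlices

section PerfectProfinite

lemma perfectSpace_pi {ι : Type*} [Infinite ι] (X : ι → Type*) [∀ i, TopologicalSpace (X i)]
    [∀ i, Nontrivial (X i)] : PerfectSpace (∀ i, X i) := by
  classical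
  refine perfectSpace_iff_forall_not_isolated.2 fun x => ?_
  rw [← mem_closure_iff_nhdsWithin_neBot, mem_closure_iff]
  intro U hU hx
  obtain ⟨s, u, hu, hsub⟩ := isOpen_pi_iff.1 hU x hx
  obtain ⟨i, hi⟩ := Infinite.exists_notMem_finset s
  obtain ⟨a, ha⟩ := exists_ne (x i)
  refine ⟨Function.update x i a, hsub fun j hj => ?_, fun h => ha ?_⟩
  · rw [Function.update_of_ne (ne_of_mem_of_not_mem hj hi)]
    exact (hu j hj).2
  · simpa using congrFun h i

variable {K : Type*} [TopologicalSpace K] [CompactSpace K] [T2Space K] [TotallyDisconnectedSpace K]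
  [PerfectSpace K] {ι : Type*} [Finite ι] {O : ι → Set K}

lemma exists_clopens_inter_nonempty_and_diff_nonempty (hO : ∀ i, IsOpen (O i))
    (hne : ∀ i, (O i).Nonempty) :
    ∃ U : Clopens K, ∀ i, (O i ∩ U).Nonempty ∧ (O i \ U).Nonempty := by
  choose x hx using hne
  have hinf (i) : (O i).Infinite := infinite_of_mem_nhds (x i) ((hO i).mem_nhds (hx i))
  choose y hyO hyx using fun i => (hinf i).exists_notMem_finite (Set.finite_range x)
  obtain ⟨U, hU, hxU, hUy⟩ := exists_clopen_of_closed_subset_open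
    (Set.finite_range x).isClosed (Set.finite_range y).isClosed.isOpen_compl
    (by rintro _ hz ⟨j, rfl⟩; exact hyx j hz)
  exact ⟨⟨U, hU⟩, fun i => ⟨⟨x i, hx i, hxU ⟨i, rfl⟩⟩, ⟨y i, hyO i, fun h => hUy h ⟨i, rfl⟩⟩⟩⟩

lemma exists_le_clopens_inter_nonempty_and_inter_sdiff_nonempty (hO : ∀ i, IsOpen (O i))
    {A : Clopens K} (hA : ∀ i, (O i ∩ A).Nonempty) :
    ∃ B ≤ A, (∀ i, (O i ∩ B).Nonempty) ∧ ∀ i, (O i ∩ ↑(A \ B)).Nonempty := by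
  obtain ⟨U, hU⟩ := exists_clopens_inter_nonempty_and_diff_nonempty
    (fun i => (hO i).inter A.isOpen) hA
  refine ⟨A ⊓ U, inf_le_left, fun i => (hU i).1.mono ?_, fun i => (hU i).2.mono ?_⟩
  · rw [Clopens.coe_inf, Set.inter_assoc]
  · rintro t ⟨⟨htO, htA⟩, htU⟩
    exact ⟨htO, htA, fun h => htU h.2⟩

lemma exists_pairwise_disjoint_clopens_inter_nonempty (hO : ∀ i, IsOpen (O i))
    (hne : ∀ i, (O i).Nonempty) :
    ∃ U : ℕ → Clopens K, Pairwise (Disjoint on U) ∧ ∀ n i, (O i ∩ U n).Nonempty := by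
  choose! B hBle hB hAB using fun A =>
    exists_le_clopens_inter_nonempty_and_inter_sdiff_nonempty (A := A) hO
  let A (n : ℕ) : Clopens K := B^[n] ⊤
  have hA_succ (n) : A (n + 1) = B (A n) := Function.iterate_succ_apply' B n ⊤
  have hA (n) : ∀ i, (O i ∩ A n).Nonempty := by
    induction n with
    | zero => simpa [A] using hne
    | succ n ih => rw [hA_succ]; exact hB _ ih
  have hA_anti : Antitone A := antitone_nat_of_succ_le fun n => hA_succ n ▸ hBle _ (hA n)
  refine ⟨fun n => A n \ A (n + 1), (pairwise_disjoint_on _).2 fun m n hmn => ?_, fun n => ?_⟩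
  · exact disjoint_sdiff_self_left.mono_right (sdiff_le.trans (hA_anti hmn))
  · simpa only [hA_succ] using hAB _ (hA n)

end PerfectProfinite

section ClopenIndicator

variable {K : Type*} [TopologicalSpace K]

/-- The indicator function of a clopen set, as a continuous function. -/
noncomputable def clopenIndicator (U : Clopens K) : C(K, ℝ) :=
  LocallyConstant.charFn ℝ U.isClopen

lemma clopenIndicator_apply_of_mem {U : Clopens K} {t : K} (ht : t ∈ U) :
    clopenIndicator U t = 1 := Set.indicator_of_mem ht 1

lemma clopenIndicator_apply_of_notMem {U : Clopens K} {t : K} (ht : t ∉ U) :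
    clopenIndicator U t = 0 := Set.indicator_of_notMem ht 1

lemma clopenIndicator_top : clopenIndicator (⊤ : Clopens K) = 1 := by
  ext t
  exact clopenIndicator_apply_of_mem (Set.mem_univ t)

variable [CompactSpace K]

lemma norm_sum_smul_clopenIndicator_le_one {ι : Type*} {U : ι → Clopens K}
    (hU : Pairwise (Disjoint on U)) (s : Finset ι) {ε : ι → ℝ} (hε : ∀ k, |ε k| ≤ 1) :
    ‖∑ k ∈ s, ε k • clopenIndicator (U k)‖ ≤ 1 := by
  refine (ContinuousMap.norm_le _ zero_le_one).2 fun t => ?_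
  simp only [ContinuousMap.coe_sum, Finset.sum_apply, ContinuousMap.smul_apply, smul_eq_mul,
    Real.norm_eq_abs]
  by_cases ht : ∃ k ∈ s, t ∈ U k
  · obtain ⟨k, hk, htk⟩ := ht
    have hother (j) (hjk : j ≠ k) : ε j * clopenIndicator (U j) t = 0 := by
      have htj : t ∉ U j := fun h =>
        Set.disjoint_left.1 (Clopens.coe_disjoint.2 (hU hjk)) h htk
      rw [clopenIndicator_apply_of_notMem htj, mul_zero]
    rw [Finset.sum_eq_single_of_mem k hk fun j _ => hother j, clopenIndicator_apply_of_mem htk,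
      mul_one]
    exact hε k
  · push Not at ht
    rw [Finset.sum_eq_zero fun k hk => by rw [clopenIndicator_apply_of_notMem (ht k hk), mul_zero]]
    simp

lemma norm_one_sub_two_smul_clopenIndicator_le_one (U : Clopens K) :
    ‖1 - (2 : ℝ) • clopenIndicator U‖ ≤ 1 :=
  (ContinuousMap.norm_le _ zero_le_one).2 fun t => by
    by_cases ht : t ∈ U
    · norm_num [clopenIndicator_apply_of_mem ht]
    · norm_num [clopenIndicator_apply_of_notMem ht]

lemma abs_apply_le_norm_clopenIndicator_mul {V : Clopens K} {t : K} (ht : t ∈ V) (f : C(K, ℝ)) :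
    |f t| ≤ ‖clopenIndicator V * f‖ := by
  simpa [clopenIndicator_apply_of_mem ht] using (clopenIndicator V * f).norm_coe_le_norm t

lemma norm_clopenIndicator_mul_le {V : Clopens K} {f : C(K, ℝ)} {C : ℝ} (hC : 0 ≤ C)
    (h : ∀ t ∈ V, |f t| ≤ C) : ‖clopenIndicator V * f‖ ≤ C := by
  refine (ContinuousMap.norm_le _ hC).2 fun t => ?_
  by_cases ht : t ∈ V
  · simpa [clopenIndicator_apply_of_mem ht] using h t ht
  · simpa [clopenIndicator_apply_of_notMem ht] using hC

lemma exists_mem_abs_eq_norm_clopenIndicator_mul {V : Clopens K} {f : C(K, ℝ)}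
    (hf : clopenIndicator V * f ≠ 0) : ∃ t ∈ V, |f t| = ‖clopenIndicator V * f‖ := by
  have hpos := norm_pos_iff.2 hf
  obtain ⟨t, ht⟩ : ∃ t, ‖clopenIndicator V * f‖ ≤ ‖(clopenIndicator V * f) t‖ := by
    by_contra! hlt
    exact lt_irrefl _ ((ContinuousMap.norm_lt_iff _ hpos).2 hlt)
  have htV : t ∈ V := by
    by_contra htV
    rw [ContinuousMap.mul_apply, clopenIndicator_apply_of_notMem htV, zero_mul, norm_zero] at ht
    exact hpos.not_ge ht
  refine ⟨t, htV, le_antisymm (abs_apply_le_norm_clopenIndicator_mul htV f) ?_⟩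
  simpa [clopenIndicator_apply_of_mem htV] using ht

variable [T2Space K] [TotallyDisconnectedSpace K]

-- Where `f` is nearly constant on `V`, the norms `‖1_V (f ± g)‖` control `|f s| + |g s|` for every
-- `s ∈ V`, since this is the larger of `|f s + g s|` and `|f s - g s|`.
lemma exists_clopens_mem_eventually_abs_lt {f : C(K, ℝ)} {g : ℕ → C(K, ℝ)}
    (h : ∀ V : Clopens K, Tendsto (fun n =>
      midpointDefect (clopenIndicator V * f) (clopenIndicator V * g n)) atTop (𝓝 0))
    (t : K) {ε : ℝ} (hε : 0 < ε) :
    ∃ V : Clopens K, t ∈ V ∧ ∀ᶠ n in atTop, ∀ s ∈ V, |g n s| < ε := by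
  have hopen : IsOpen {s | |f s - f t| < ε / 3} := isOpen_lt (by fun_prop) continuous_const
  obtain ⟨V, htV, hVf⟩ : ∃ V : Clopens K, t ∈ V ∧ ∀ s ∈ V, |f s - f t| < ε / 3 := by
    obtain ⟨V, hV, htV, hVf⟩ := compact_exists_isClopen_in_isOpen hopen (x := t) (by simpa using hε)
    exact ⟨⟨V, hV⟩, htV, fun _ => @hVf _⟩
  refine ⟨V, htV, ?_⟩
  have hsup : ‖clopenIndicator V * f‖ ≤ |f t| + ε / 3 :=
    norm_clopenIndicator_mul_le (by positivity) fun s hs =>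
      sub_le_iff_le_add'.1 ((abs_sub_abs_le_abs_sub _ _).trans (hVf s hs).le)
  have hlt : ‖clopenIndicator V * f‖ < |f t| + 2 * ε / 3 := by linarith
  filter_upwards [(tendsto_norm_add_of_tendsto_midpointDefect (h V)).eventually (gt_mem_nhds hlt),
    (tendsto_norm_sub_of_tendsto_midpointDefect (h V)).eventually (gt_mem_nhds hlt)]
    with n hadd hsub s hs
  rw [← mul_add] at hadd
  rw [← mul_sub] at hsub
  have hadd_s := (abs_apply_le_norm_clopenIndicator_mul hs (f + g n)).trans_lt hadd
  have hsub_s := (abs_apply_le_norm_clopenIndicator_mul hs (f - g n)).trans_lt hsub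
  simp only [ContinuousMap.add_apply, ContinuousMap.sub_apply, abs_lt] at hadd_s hsub_s
  have hnear := abs_lt.1 (hVf s hs)
  rcases abs_cases (f t) with h | h <;> rw [abs_lt] <;> constructor <;> linarith

lemma tendsto_zero_of_tendsto_midpointDefect_clopenIndicator_mul {f : C(K, ℝ)} {g : ℕ → C(K, ℝ)}
    (h : ∀ V : Clopens K, Tendsto (fun n =>
      midpointDefect (clopenIndicator V * f) (clopenIndicator V * g n)) atTop (𝓝 0)) :
    Tendsto g atTop (𝓝 0) := by
  refine ContinuousMap.tendsto_of_tendstoLocallyUniformly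
    (Metric.tendstoLocallyUniformly_iff.2 fun ε hε t => ?_)
  obtain ⟨V, htV, hV⟩ := exists_clopens_mem_eventually_abs_lt h t hε
  exact ⟨V, V.isOpen.mem_nhds htV, by simpa using hV⟩

lemma exists_disjoint_clopens_mul_norm_le [PerfectSpace K] (f : C(K, ℝ)) (s : Finset (Clopens K))
    {θ : ℝ} (hθ : θ < 1) :
    ∃ U : ℕ → Clopens K, Pairwise (Disjoint on U) ∧ ∀ n, ∀ V ∈ s,
      θ * ‖clopenIndicator V * f‖ ≤ ‖clopenIndicator V * (clopenIndicator (U n) * f)‖ := by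
  let O (V : {V : s // clopenIndicator V.1 * f ≠ 0}) : Set K :=
    V.1.1 ∩ {t | θ * ‖clopenIndicator V.1.1 * f‖ < |f t|}
  have hO (V) : IsOpen (O V) :=
    V.1.1.isOpen.inter (isOpen_lt continuous_const (by fun_prop))
  have hne (V) : (O V).Nonempty := by
    obtain ⟨t, htV, ht⟩ := exists_mem_abs_eq_norm_clopenIndicator_mul V.2
    exact ⟨t, htV, ht ▸ mul_lt_of_lt_one_left (norm_pos_iff.2 V.2) hθ⟩
  obtain ⟨U, hU, hUO⟩ := exists_pairwise_disjoint_clopens_inter_nonempty hO hne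
  refine ⟨U, hU, fun n V hV => ?_⟩
  by_cases hVf : clopenIndicator V * f = 0
  · simp [hVf]
  obtain ⟨t, ⟨htV, ht⟩, htU⟩ := hUO n ⟨⟨V, hV⟩, hVf⟩
  refine ht.le.trans ?_
  simpa [clopenIndicator_apply_of_mem htU] using
    abs_apply_le_norm_clopenIndicator_mul htV (clopenIndicator (U n) * f)

end ClopenIndicator

section Renorming

variable {K : Type*} [TopologicalSpace K] [CompactSpace K]

lemma norm_smul_clopenIndicator_mul_le (w : ℓ²(Clopens K, ℝ)) (f : C(K, ℝ)) (V : Clopens K) :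
    ‖w V • (clopenIndicator V * f)‖ ≤ ‖(‖f‖ • w) V‖ := by
  rw [norm_smul, lp.coeFn_smul, Pi.smul_apply, norm_smul, norm_norm, mul_comm ‖f‖]
  gcongr
  exact norm_clopenIndicator_mul_le (norm_nonneg f) fun t _ => f.norm_coe_le_norm t

/-- The embedding `f ↦ (w V • 1_V f)_V` of `C(K)` into an `ℓ²`-sum of copies of `C(K)` indexed by
the clopen sets `V`. Pulling back the norm of the sum gives the renorming
`(∑ V, w V ^ 2 * (sup_V |f|) ^ 2) ^ (1 / 2)` of `C(K)`. -/
noncomputable def clopenEmbedding (w : ℓ²(Clopens K, ℝ)) :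
    C(K, ℝ) →L[ℝ] ℓ²(Clopens K, C(K, ℝ)) :=
  LinearMap.mkContinuous
    { toFun f := ⟨fun V => w V • (clopenIndicator V * f),
        (lp.memℓp (‖f‖ • w)).mono' (norm_smul_clopenIndicator_mul_le w f)⟩
      map_add' f g := Subtype.ext (funext fun V =>
        (congrArg (w V • ·) (mul_add (clopenIndicator V) f g)).trans (smul_add _ _ _))
      map_smul' c f := Subtype.ext (funext fun V => by simp [smul_comm c]) }
    ‖w‖ fun f => by
      rw [mul_comm, ← norm_norm f, ← norm_smul]
      exact lp.norm_mono two_ne_zero (norm_smul_clopenIndicator_mul_le w f)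

variable (w : ℓ²(Clopens K, ℝ))

lemma clopenEmbedding_apply (f : C(K, ℝ)) (V : Clopens K) :
    clopenEmbedding w f V = w V • (clopenIndicator V * f) := rfl

lemma norm_clopenEmbedding_mul_le {u : C(K, ℝ)} (hu : ‖u‖ ≤ 1) (f : C(K, ℝ)) :
    ‖clopenEmbedding w (u * f)‖ ≤ ‖clopenEmbedding w f‖ := by
  refine lp.norm_mono two_ne_zero fun V => ?_
  rw [clopenEmbedding_apply, clopenEmbedding_apply, mul_left_comm, norm_smul, norm_smul]
  gcongr
  exact (norm_mul_le _ _).trans (mul_le_of_le_one_left (norm_nonneg _) hu)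

/-- The space `C(K)` under the norm `(∑ V, w V ^ 2 * (sup_V |f|) ^ 2) ^ (1 / 2)`, realised as a
subspace of an `ℓ²`-sum. -/
noncomputable abbrev ClopenRenorming : Submodule ℝ ℓ²(Clopens K, C(K, ℝ)) :=
  (clopenEmbedding w).range

lemma isWeaklyNull_rangeRestrict_clopenIndicator_mul {U : ℕ → Clopens K}
    (hU : Pairwise (Disjoint on U)) (f : C(K, ℝ)) :
    IsWeaklyNull fun n => (clopenEmbedding w).rangeRestrict (clopenIndicator (U n) * f) := by
  refine isWeaklyNull_of_norm_sum_smul_le (C := ‖clopenEmbedding w f‖) fun s ε hε => ?_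
  calc
    ‖∑ k ∈ s, ε k • (clopenEmbedding w).rangeRestrict (clopenIndicator (U k) * f)‖
      = ‖clopenEmbedding w ((∑ k ∈ s, ε k • clopenIndicator (U k)) * f)‖ := by
        simp only [← map_smul, ← map_sum, Finset.sum_mul, smul_mul_assoc]
        rfl
    _ ≤ ‖clopenEmbedding w f‖ :=
      norm_clopenEmbedding_mul_le w (norm_sum_smul_clopenIndicator_le_one hU s hε) f

lemma norm_clopenEmbedding_sub_two_smul_le (f : C(K, ℝ)) (U : Clopens K) :
    ‖clopenEmbedding w f - (2 : ℝ) • clopenEmbedding w (clopenIndicator U * f)‖ ≤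
      ‖clopenEmbedding w f‖ :=
  calc
    ‖clopenEmbedding w f - (2 : ℝ) • clopenEmbedding w (clopenIndicator U * f)‖
      = ‖clopenEmbedding w ((1 - (2 : ℝ) • clopenIndicator U) * f)‖ := by
        rw [sub_mul, one_mul, smul_mul_assoc, map_sub, map_smul]
    _ ≤ ‖clopenEmbedding w f‖ :=
      norm_clopenEmbedding_mul_le w (norm_one_sub_two_smul_clopenIndicator_le_one U) f

theorem hasSeqDD2P_clopenRenorming [T2Space K] [TotallyDisconnectedSpace K] [PerfectSpace K] :
    HasSeqDD2P (ClopenRenorming w) := by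
  rintro ⟨_, f, rfl⟩ θ hθ
  obtain ⟨η, hθη, hη⟩ := exists_between hθ
  obtain ⟨s, hs⟩ := exists_finset_mul_norm_le ENNReal.ofNat_ne_top (clopenEmbedding w f) hθη
  obtain ⟨U, hU, hUs⟩ := exists_disjoint_clopens_mul_norm_le f s (θ := η / 2) (by linarith)
  refine ⟨fun n => (2 : ℝ) • (clopenEmbedding w).rangeRestrict (clopenIndicator (U n) * f),
    (isWeaklyNull_rangeRestrict_clopenIndicator_mul w hU f).smul_of_abs_le fun _ => le_rfl,
    fun n => ⟨norm_clopenEmbedding_sub_two_smul_le w f (U n), hs _ fun V hV => ?_⟩⟩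
  calc
    η * ‖clopenEmbedding w f V‖ = 2 * (‖w V‖ * (η / 2 * ‖clopenIndicator V * f‖)) := by
      rw [clopenEmbedding_apply, norm_smul]
      ring
    _ ≤ 2 * (‖w V‖ * ‖clopenIndicator V * (clopenIndicator (U n) * f)‖) := by
      gcongr
      exact hUs n V hV
    _ = ‖(2 : ℝ) • clopenEmbedding w (clopenIndicator (U n) * f) V‖ := by
      rw [clopenEmbedding_apply, norm_smul, norm_smul, Real.norm_two]

theorem isMLUR_clopenRenorming [T2Space K] [TotallyDisconnectedSpace K] (hw : ∀ V, w V ≠ 0) :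
    IsMLUR (ClopenRenorming w) := by
  refine isMLUR_iff_midpointDefect.2 ?_
  rintro ⟨_, f, rfl⟩ y hd
  choose g hg using fun n => (y n).2
  obtain rfl : y = fun n => (clopenEmbedding w).rangeRestrict (g n) :=
    funext fun n => Subtype.ext (hg n).symm
  have hdefect (V : Clopens K) : Tendsto (fun n =>
      midpointDefect (clopenIndicator V * f) (clopenIndicator V * g n)) atTop (𝓝 0) :=
    tendsto_midpointDefect_of_smul (hw V) (tendsto_midpointDefect_apply hd V)
  exact ((clopenEmbedding w).rangeRestrict.continuous.tendsto' 0 0 (map_zero _)).comp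
    (tendsto_zero_of_tendsto_midpointDefect_clopenIndicator_mul hdefect)

variable {w}

lemma antilipschitzWith_clopenEmbedding (hw : w ⊤ ≠ 0) :
    AntilipschitzWith ‖w ⊤‖₊⁻¹ (clopenEmbedding w) :=
  AddMonoidHomClass.antilipschitz_of_bound _ fun f => by
    rw [NNReal.coe_inv, coe_nnnorm, le_inv_mul_iff₀ (norm_pos_iff.2 hw), ← norm_smul]
    simpa only [clopenEmbedding_apply, clopenIndicator_top, one_mul] using
      lp.norm_apply_le_norm two_ne_zero (clopenEmbedding w f) ⊤

lemma completeSpace_clopenRenorming (hw : w ⊤ ≠ 0) : CompleteSpace (ClopenRenorming w) :=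
  ((antilipschitzWith_clopenEmbedding hw).isClosed_range
    (clopenEmbedding w).uniformContinuous).completeSpace_coe

lemma nontrivial_clopenRenorming [Nonempty K] (hw : w ⊤ ≠ 0) : Nontrivial (ClopenRenorming w) :=
  (Set.rangeFactorization_injective.2 (antilipschitzWith_clopenEmbedding hw).injective).nontrivial

end Renorming

lemma exists_pos_lp_two (ι : Type*) [Countable ι] : ∃ w : ℓ²(ι, ℝ), ∀ i, 0 < w i := by
  have := Encodable.ofCountable ι
  obtain ⟨w, hpos, _, hw, _⟩ := posSumOfEncodable zero_lt_one ι
  have hmem : Memℓp w 1 := memℓp_gen (by simpa using hw.summable.norm)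
  exact ⟨⟨w, hmem.of_exponent_ge one_le_two⟩, hpos⟩

/-- There exists a Banach space which is MLUR, has the diameter 2 property, has the
local diameter 2 property +, and has finite convex combinations of slices of its unit
ball of arbitrarily small diameter. -/
theorem exists_MLUR_D2P_LD2Pplus_small_ccs :
    ∃ (X : Type) (_ : NormedAddCommGroup X) (_ : NormedSpace ℝ X),
      CompleteSpace X ∧
      -- MLUR
      (∀ x : X, ‖x‖ = 1 → ∀ y : ℕ → X,
        Tendsto (fun n => ‖x + y n‖) atTop (𝓝 1) →
        Tendsto (fun n => ‖x - y n‖) atTop (𝓝 1) →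
        Tendsto (fun n => ‖y n‖) atTop (𝓝 0)) ∧
      -- D2P
      (∀ W : Set X, W.Nonempty →
        (∃ V : Set X, IsOpen[weakTop X] V ∧ W = V ∩ {x : X | ‖x‖ ≤ 1}) →
        Metric.diam W = 2) ∧
      -- LD2P+
      (∀ f : X →L[ℝ] ℝ, ‖f‖ = 1 → ∀ ε : ℝ, 0 < ε → ∀ δ : ℝ, 0 < δ →
        ∀ x : X, ‖x‖ ≤ 1 → f x > 1 - ε → ‖x‖ = 1 →
          ∃ y : X, ‖y‖ ≤ 1 ∧ f y > 1 - ε ∧ ‖x - y‖ > 2 - δ) ∧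
      -- convex combinations of slices with arbitrarily small diameter
      (∀ δ : ℝ, 0 < δ →
        ∃ (n : ℕ) (f : Fin n → (X →L[ℝ] ℝ)) (ε : Fin n → ℝ) (lam : Fin n → ℝ),
          0 < n ∧ (∀ j, ‖f j‖ = 1) ∧ (∀ j, 0 < ε j) ∧ (∀ j, 0 ≤ lam j) ∧
          (∑ j, lam j) = 1 ∧
          Metric.diam {w : X | ∃ y : Fin n → X,
            (∀ j, ‖y j‖ ≤ 1 ∧ f j (y j) > 1 - ε j) ∧ w = ∑ j, lam j • y j} < δ) := by
  have : PerfectSpace (ℕ → Bool) := perfectSpace_pi _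
  have : Countable (Clopens (ℕ → Bool)) :=
    TopologicalSpace.Clopens.countable_iff_secondCountable.2 inferInstance
  obtain ⟨w, hw⟩ := exists_pos_lp_two (Clopens (ℕ → Bool))
  have : CompleteSpace (ClopenRenorming w) := completeSpace_clopenRenorming (hw ⊤).ne'
  have : Nontrivial (ClopenRenorming w) := nontrivial_clopenRenorming (hw ⊤).ne'
  have : Nontrivial (lp (fun _ : ℕ => ClopenRenorming w) 2) := nontrivial_lp
  have hMLUR : IsMLUR (lp (fun _ : ℕ => ClopenRenorming w) 2) :=
    isMLUR_lp fun _ => isMLUR_clopenRenorming w fun V => (hw V).ne'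
  have hDD2P : HasSeqDD2P (lp (fun _ : ℕ => ClopenRenorming w) 2) :=
    hasSeqDD2P_lp ENNReal.ofNat_ne_top fun _ => hasSeqDD2P_clopenRenorming w
  refine ⟨lp (fun _ : ℕ => ClopenRenorming w) 2, inferInstance, inferInstance, inferInstance,
    ?_, ?_, ?_, fun δ hδ => exists_diam_convexComb_slices_lt hδ⟩
  · intro x hx y hadd hsub
    exact tendsto_zero_iff_norm_tendsto_zero.1 (hMLUR x y (hx ▸ hadd) (hx ▸ hsub))
  · rintro _ hne ⟨V, hV, rfl⟩
    exact hDD2P.diam_eq_two hV hne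
  · intro f _ ε _ δ hδ x _ hfx hx
    exact hDD2P.exists_mem_slice_lt_norm_sub f hδ hx hfx
end

section
/- A Banach space X has the local diameter 2 property + if and only if its dual has the weak* local diameter 2 property +, i.e. for every x ∈ S_X, every ε > 0, every δ > 0, and every x* in the weak* slice S(x,ε) with ‖x*‖ = 1 there exists y* ∈ S(x,ε) with ‖x* − y*‖ > 2 − δ. -/
/-!
The two properties are exchanged by swapping the roles of `X` and `X*` in the pairing
`(x, f) ↦ f x`, which is isometric in both variables, so a single implication suffices.

Let `f` be a unit vector in the slice `S(x, ε)`. Choosing `u` in the ball with `f u` close to `1`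
and normalizing `x + l • u` for large `l` produces a unit vector `v` and an arbitrarily small `d`
with `f ∈ S(v, d) ⊆ S(x, ε)`. Then `v` lies in the slice `S(f, d)`, so the hypothesis gives
`y ∈ S(f, d)` with `‖v - y‖ > 2 - d`. A functional `g` of norm at most `1` with
`g (v - y) > 2 - d` satisfies `g v > 1 - d` and `g y < -(1 - d)`; hence `g ∈ S(v, d) ⊆ S(x, ε)`
and `‖f - g‖ ≥ (f - g) y > 2 - 2 * d`.
-/

section IsometricPairing

variable {E F : Type*} [SeminormedAddCommGroup E] [NormedSpace ℝ E]
  [SeminormedAddCommGroup F] [NormedSpace ℝ F] {B : E →L[ℝ] F →L[ℝ] ℝ}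

/-- A bilinear pairing through which each of the two spaces embeds isometrically into the dual of
the other. Using it in place of the pairing of a space with its dual makes the argument symmetric
in the two spaces. -/
structure IsIsometricPairing (B : E →L[ℝ] F →L[ℝ] ℝ) : Prop where
  norm_apply (x : E) : ‖B x‖ = ‖x‖
  norm_flip_apply (f : F) : ‖B.flip f‖ = ‖f‖

/-- The slice `S(f, ε)` of the closed unit ball of `E` cut out by `f : F` through the pairing `B`.
For the pairing of `X` with its dual these are the slices of the ball of `X`, and for the flipped
pairing the weak* slices of the ball of the dual. -/
def pairingSlice (B : E →L[ℝ] F →L[ℝ] ℝ) (f : F) (ε : ℝ) : Set E :=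
  {x | ‖x‖ ≤ 1 ∧ 1 - ε < B x f}

/-- The local diameter 2 property + of `E`, tested on the slices cut out by elements of `F`. For the
pairing of `X` with its dual this is the LD2P+ of `X`, and for the flipped pairing the weak*-LD2P+
of the dual. -/
def HasLD2PPlus (B : E →L[ℝ] F →L[ℝ] ℝ) : Prop :=
  ∀ f : F, ‖f‖ = 1 → ∀ ε : ℝ, 0 < ε → ∀ δ : ℝ, 0 < δ →
    ∀ x ∈ pairingSlice B f ε, ‖x‖ = 1 → ∃ y ∈ pairingSlice B f ε, 2 - δ < ‖x - y‖

theorem exists_norm_le_one_lt_apply_of_lt_norm {φ : StrongDual ℝ E} {r : ℝ} (hr : r < ‖φ‖) :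
    ∃ x : E, ‖x‖ ≤ 1 ∧ r < φ x := by
  by_contra! hφ
  have hr₀ : 0 ≤ r := by simpa using hφ 0
  refine hr.not_ge (ContinuousLinearMap.opNorm_le_of_unit_norm hr₀ fun x hx ↦ abs_le'.mpr ⟨?_, ?_⟩)
  · exact hφ x hx.le
  · rw [← map_neg]
    exact hφ (-x) ((norm_neg x).trans_le hx.le)

theorem pairingSlice_inv_norm_smul {w : F} (hw : 0 < ‖w‖) (a : ℝ) :
    pairingSlice B (‖w‖⁻¹ • w) (1 - a / ‖w‖) = {x | ‖x‖ ≤ 1 ∧ a < B x w} := by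
  ext x
  simp only [pairingSlice, Set.mem_ofPred_eq, map_smul, smul_eq_mul, sub_sub_cancel,
    inv_mul_eq_div, div_lt_div_iff_of_pos_right hw]

namespace IsIsometricPairing

theorem flip (hB : IsIsometricPairing B) : IsIsometricPairing B.flip :=
  ⟨hB.norm_flip_apply, hB.norm_apply⟩

theorem apply_le (hB : IsIsometricPairing B) (x : E) (f : F) : B x f ≤ ‖x‖ * ‖f‖ :=
  calc B x f ≤ ‖B x f‖ := Real.le_norm_self _
    _ ≤ ‖B x‖ * ‖f‖ := (B x).le_opNorm f
    _ = ‖x‖ * ‖f‖ := by rw [hB.norm_apply]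

theorem apply_le_norm_right (hB : IsIsometricPairing B) {x : E} (hx : ‖x‖ ≤ 1) (f : F) :
    B x f ≤ ‖f‖ :=
  (hB.apply_le x f).trans (mul_le_of_le_one_left (norm_nonneg f) hx)

theorem exists_lt_apply (hB : IsIsometricPairing B) {x : E} {r : ℝ} (hr : r < ‖x‖) :
    ∃ f : F, ‖f‖ ≤ 1 ∧ r < B x f :=
  exists_norm_le_one_lt_apply_of_lt_norm (hr.trans_eq (hB.norm_apply x).symm)

theorem exists_halfspace_inter_ball_subset_slice (hB : IsIsometricPairing B) {f : F}
    (hf : ‖f‖ ≤ 1) {x : E} (hx : ‖x‖ = 1) {ε l : ℝ} (hxf : 1 - ε < B x f) (hl : 0 < l) :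
    ∃ w : F, ‖w‖ ≤ l + 1 ∧ l + 1 - ε < B x w ∧
      {y | ‖y‖ ≤ 1 ∧ l + 1 - ε < B y w} ⊆ pairingSlice B f ε := by
  have hgap : 0 < (B x f - (1 - ε)) / l := div_pos (sub_pos.mpr hxf) hl
  obtain ⟨u, hu, hxu⟩ := hB.exists_lt_apply (x := x) (r := 1 - (B x f - (1 - ε)) / l)
    (by linarith)
  have apply_w (y : E) : B y (f + l • u) = B y f + l * B y u := by
    rw [map_add, map_smul, smul_eq_mul]
  refine ⟨f + l • u, ?_, ?_, fun y ⟨hy, hyw⟩ ↦ ⟨hy, ?_⟩⟩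
  · calc ‖f + l • u‖ ≤ ‖f‖ + l * ‖u‖ := norm_add_le_of_le le_rfl (norm_smul_of_nonneg hl.le u).le
      _ ≤ 1 + l * 1 := by gcongr
      _ = l + 1 := by ring
  · rw [sub_lt_comm, lt_div_iff₀ hl] at hxu
    rw [apply_w]
    linarith
  · have hyu : B y u ≤ 1 := (hB.apply_le_norm_right hy u).trans hu
    have hlyu : l * B y u ≤ l := mul_le_of_le_one_right hl.le hyu
    rw [apply_w] at hyw
    linarith

theorem exists_slice_subset_slice (hB : IsIsometricPairing B) {f : F} (hf : ‖f‖ ≤ 1) {x : E}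
    (hx : ‖x‖ = 1) {ε δ : ℝ} (hδ : 0 < δ) (hxf : x ∈ pairingSlice B f ε) :
    ∃ v : F, ‖v‖ = 1 ∧ ∃ d : ℝ, 0 < d ∧ d ≤ δ ∧
      x ∈ pairingSlice B v d ∧ pairingSlice B v d ⊆ pairingSlice B f ε := by
  have hε : 0 < ε := by linarith [hxf.2, hB.apply_le_norm_right hx.le f]
  have hεδ : 0 < ε / δ := div_pos hε hδ
  -- This weight forces `ε / δ < ‖w‖` below, so the slice depth, at most `ε / ‖w‖`, is at most `δ`.
  set l := ε + ε / δ with hl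
  obtain ⟨w, hwl, hxw, hsub⟩ :=
    hB.exists_halfspace_inter_ball_subset_slice hf hx hxf.2 (l := l) (by positivity)
  have hlw : l + 1 - ε < ‖w‖ := hxw.trans_le (hB.apply_le_norm_right hx.le w)
  have hεδw : ε / δ < ‖w‖ := by linarith [hl]
  have hw : 0 < ‖w‖ := hεδ.trans hεδw
  have hslice := pairingSlice_inv_norm_smul (B := B) hw (l + 1 - ε)
  refine ⟨‖w‖⁻¹ • w, ?_, 1 - (l + 1 - ε) / ‖w‖, ?_, ?_, ?_, hslice.trans_subset hsub⟩
  · rw [norm_smul, norm_inv, norm_norm, inv_mul_cancel₀ hw.ne']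
  · rwa [sub_pos, div_lt_one hw]
  · have hεw : ε ≤ ‖w‖ * δ := (div_le_iff₀ hδ).mp hεδw.le
    rw [sub_le_comm, le_div_iff₀ hw]
    linarith
  · rw [hslice]
    exact ⟨hx.le, hxw⟩

theorem hasLD2PPlus_flip (hB : IsIsometricPairing B) (h : HasLD2PPlus B) :
    HasLD2PPlus B.flip := by
  intro x hx ε _ δ hδ f hfx hf
  obtain ⟨v, hv, d, hd, hdδ, hfv, hsub⟩ :=
    hB.flip.exists_slice_subset_slice hx.le hf (half_pos hδ) hfx
  obtain ⟨y, ⟨hy, hyf⟩, hvy⟩ := h f hf d hd d hd v ⟨hv.le, hfv.2⟩ hv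
  obtain ⟨g, hg, hgvy⟩ := hB.exists_lt_apply hvy
  have hvyg : B (v - y) g = B v g - B y g := by rw [map_sub, sub_apply]
  have hvg : B v g ≤ 1 := (hB.apply_le_norm_right hv.le g).trans hg
  have hyg : -B y g ≤ 1 := by
    simpa using (hB.apply_le_norm_right hy (-g)).trans ((norm_neg g).trans_le hg)
  refine ⟨g, hsub ⟨hg, ?_⟩, ?_⟩
  · change 1 - d < B v g
    linarith
  · calc 2 - δ ≤ 2 - 2 * d := by linarith
      _ < B y f - B y g := by linarith
      _ = B y (f - g) := (map_sub (B y) f g).symm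
      _ ≤ ‖f - g‖ := hB.apply_le_norm_right hy (f - g)

theorem hasLD2PPlus_iff_flip (hB : IsIsometricPairing B) :
    HasLD2PPlus B ↔ HasLD2PPlus B.flip :=
  ⟨hB.hasLD2PPlus_flip, hB.flip.hasLD2PPlus_flip⟩

end IsIsometricPairing

theorem isIsometricPairing_inclusionInDoubleDual :
    IsIsometricPairing (NormedSpace.inclusionInDoubleDual ℝ E) where
  norm_apply := (NormedSpace.inclusionInDoubleDualLi ℝ).norm_map
  norm_flip_apply _ := rfl

end IsometricPairing

theorem LD2P_plus_iff_weak_star_LD2P_plus_general {X : Type*} [SeminormedAddCommGroup X]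
    [NormedSpace ℝ X] :
    (∀ f : X →L[ℝ] ℝ, ‖f‖ = 1 → ∀ ε : ℝ, 0 < ε → ∀ δ : ℝ, 0 < δ →
      ∀ x : X, ‖x‖ ≤ 1 → f x > 1 - ε → ‖x‖ = 1 →
        ∃ y : X, ‖y‖ ≤ 1 ∧ f y > 1 - ε ∧ ‖x - y‖ > 2 - δ) ↔
    (∀ x : X, ‖x‖ = 1 → ∀ ε : ℝ, 0 < ε → ∀ δ : ℝ, 0 < δ →
      ∀ f : X →L[ℝ] ℝ, ‖f‖ ≤ 1 → f x > 1 - ε → ‖f‖ = 1 →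
        ∃ g : X →L[ℝ] ℝ, ‖g‖ ≤ 1 ∧ g x > 1 - ε ∧ ‖f - g‖ > 2 - δ) := by
  simpa only [HasLD2PPlus, pairingSlice, Set.mem_ofPred_eq, and_imp, and_assoc,
    ContinuousLinearMap.flip_apply, NormedSpace.dual_def] using
    (isIsometricPairing_inclusionInDoubleDual (E := X)).hasLD2PPlus_iff_flip

/-- A Banach space `X` has the local diameter 2 property + if and only if its dual has the
weak* local diameter 2 property +. -/
theorem LD2P_plus_iff_weak_star_LD2P_plus {X : Type*} [NormedAddCommGroup X]
    [NormedSpace ℝ X] [CompleteSpace X] :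
    (∀ f : X →L[ℝ] ℝ, ‖f‖ = 1 → ∀ ε : ℝ, 0 < ε → ∀ δ : ℝ, 0 < δ →
      ∀ x : X, ‖x‖ ≤ 1 → f x > 1 - ε → ‖x‖ = 1 →
        ∃ y : X, ‖y‖ ≤ 1 ∧ f y > 1 - ε ∧ ‖x - y‖ > 2 - δ) ↔
    (∀ x : X, ‖x‖ = 1 → ∀ ε : ℝ, 0 < ε → ∀ δ : ℝ, 0 < δ →
      ∀ f : X →L[ℝ] ℝ, ‖f‖ ≤ 1 → f x > 1 - ε → ‖f‖ = 1 →
        ∃ g : X →L[ℝ] ℝ, ‖g‖ ≤ 1 ∧ g x > 1 - ε ∧ ‖f - g‖ > 2 - δ) :=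
  LD2P_plus_iff_weak_star_LD2P_plus_general
end

section
/- The space c₀ of real sequences converging to 0 with the supremum norm does not have the local diameter 2 property +: taking x* = e₁* (the first coordinate functional) and x = e₁ (the first unit vector), for every 0 < ε ≤ 1, e₁ belongs to the slice S(e₁*,ε) and ‖e₁‖ = 1, yet every y ∈ S(e₁*,ε) satisfies ‖e₁ − y‖ ≤ 1. -/
open Filter Topology

/-- The first unit vector `e₁` in `c₀ = C₀(ℕ, ℝ)`, the space of real sequences
converging to `0` with the supremum norm. -/
noncomputable def e1 : ZeroAtInftyContinuousMap ℕ ℝ where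
  toFun := fun n => if n = 0 then 1 else 0
  continuous_toFun := continuous_of_discreteTopology
  zero_at_infty' := by
    rw [cocompact_eq_cofinite, Nat.cofinite_eq_atTop]
    refine tendsto_nhds_of_eventually_eq ?_
    filter_upwards [Filter.eventually_ge_atTop 1] with n hn
    simp [Nat.one_le_iff_ne_zero.mp hn]

/-!
If `f x` and `g x` never have opposite signs, then `|f x - g x| ≤ max |f x| |g x|` pointwise, so
`‖f - g‖ ≤ max ‖f‖ ‖g‖`. For `ε ≤ 1` every `y ∈ S(e₁*, ε)` has positive first coordinate, so
this applies to `e₁`, which vanishes at all other coordinates, and to `y`.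
-/

theorem abs_sub_le_max_abs_of_mul_nonneg {R : Type*} [Ring R] [LinearOrder R]
    [IsStrictOrderedRing R] {a b : R} (hab : 0 ≤ a * b) : |a - b| ≤ max |a| |b| := by
  rcases mul_nonneg_iff.mp hab with ⟨ha, hb⟩ | ⟨ha, hb⟩
  · rw [abs_of_nonneg ha, abs_of_nonneg hb]
    exact abs_sub_le_of_nonneg_of_le ha (le_max_left a b) hb (le_max_right a b)
  · rw [← abs_neg (a - b), neg_sub', abs_of_nonpos ha, abs_of_nonpos hb]
    exact abs_sub_le_of_nonneg_of_le (neg_nonneg.mpr ha) (le_max_left _ _)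
      (neg_nonneg.mpr hb) (le_max_right _ _)

section ZeroAtInfty

open scoped ZeroAtInfty

variable {X E : Type*} [TopologicalSpace X] [SeminormedAddCommGroup E]

theorem zeroAtInfty_norm_le {f : C₀(X, E)} {C : ℝ} (hC : 0 ≤ C) :
    ‖f‖ ≤ C ↔ ∀ x, ‖f x‖ ≤ C :=
  BoundedContinuousFunction.norm_le (f := f.toBCF) hC

theorem zeroAtInfty_norm_apply_le_norm (f : C₀(X, E)) (x : X) : ‖f x‖ ≤ ‖f‖ :=
  f.toBCF.norm_coe_le_norm x

theorem zeroAtInfty_norm_sub_le_max_of_mul_nonneg {f g : C₀(X, ℝ)}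
    (hfg : ∀ x, 0 ≤ f x * g x) : ‖f - g‖ ≤ max ‖f‖ ‖g‖ := by
  refine (zeroAtInfty_norm_le (le_max_of_le_left (norm_nonneg f))).mpr fun x ↦ ?_
  calc ‖(f - g) x‖ = |f x - g x| := rfl
    _ ≤ max |f x| |g x| := abs_sub_le_max_abs_of_mul_nonneg (hfg x)
    _ ≤ max ‖f‖ ‖g‖ :=
      max_le_max (zeroAtInfty_norm_apply_le_norm f x) (zeroAtInfty_norm_apply_le_norm g x)

end ZeroAtInfty

theorem e1_apply (n : ℕ) : e1 n = if n = 0 then 1 else 0 := rfl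

theorem e1_apply_zero : e1 0 = 1 := rfl

theorem norm_e1 : ‖e1‖ = 1 := by
  apply le_antisymm
  · refine (zeroAtInfty_norm_le zero_le_one).mpr fun n ↦ ?_
    rw [e1_apply]
    split_ifs <;> simp
  · simpa [e1_apply_zero] using zeroAtInfty_norm_apply_le_norm e1 0

theorem norm_e1_sub_le_max {y : ZeroAtInftyContinuousMap ℕ ℝ} (hy : 0 ≤ y 0) :
    ‖e1 - y‖ ≤ max 1 ‖y‖ := by
  rw [← norm_e1]
  refine zeroAtInfty_norm_sub_le_max_of_mul_nonneg fun n ↦ ?_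
  rcases eq_or_ne n 0 with rfl | hn
  · rwa [e1_apply_zero, one_mul]
  · rw [e1_apply, if_neg hn, zero_mul]

/-- `c₀` does not have the LD2P+: with `x* = e₁*` (evaluation at the first coordinate)
and `x = e₁`, for every `0 < ε ≤ 1` the point `e₁` is a norm-one element of the slice
`S(e₁*, ε)`, yet every `y` in this slice satisfies `‖e₁ - y‖ ≤ 1`. -/
theorem c0_fails_LD2P_plus :
    ∀ ε : ℝ, 0 < ε → ε ≤ 1 →
      (‖e1‖ = 1 ∧ e1 0 > 1 - ε) ∧
      ∀ y : ZeroAtInftyContinuousMap ℕ ℝ, ‖y‖ ≤ 1 → y 0 > 1 - ε → ‖e1 - y‖ ≤ 1 := by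
  intro ε hε_pos hε_le
  refine ⟨⟨norm_e1, ?_⟩, fun y hy_norm hy_slice ↦ ?_⟩
  · rw [e1_apply_zero]
    exact sub_lt_self 1 hε_pos
  · have hy_nonneg : 0 ≤ y 0 := (sub_nonneg.mpr hε_le).trans hy_slice.le
    exact (norm_e1_sub_le_max hy_nonneg).trans (max_le le_rfl hy_norm)
end

section
/- Let X be a Banach space, ε > 0 and x ∈ S_X. Then for every x* ∈ S(x,ε) ∩ S_{X*} which attains its norm and every 0 < δ < ε, there exists y ∈ S_X such that x* ∈ S(y,δ) and S(y,δ) ⊆ S(x,ε). -/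
/-!
Let `z` be a point at which `f` attains its norm. Moving from `x` in the direction `z`, the
intermediate value theorem gives `w = x + t • z` with `t ≥ 0` and `(1 - δ) * ‖w‖ = 1 - ε + t`, and
`y` is `w` normalized: for a functional `g`, being above `1 - δ` at `y` means that
`1 - ε + t < g x + t * g z`. This holds for `g = f`, as `f z = 1`, and it implies `1 - ε < g x`
whenever `g z ≤ 1`, so for all `g` in the unit ball.
The thresholds `1 - δ` and `1 - ε` are `r` and `c` below.
-/

section

variable {X : Type*} [SeminormedAddCommGroup X] [NormedSpace ℝ X]

theorem exists_nonneg_mul_norm_add_smul_eq_add {x z : X} {r c : ℝ} (hz : ‖z‖ ≤ 1) (hr : r < 1)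
    (hc : c ≤ r * ‖x‖) : ∃ t : ℝ, 0 ≤ t ∧ r * ‖x + t • z‖ = c + t := by
  set a := max r 0
  have ha : 0 < 1 - a := sub_pos.2 (max_lt hr one_pos)
  -- `T` solves `a * (‖x‖ + T) = c + T`.
  set T := (a * ‖x‖ - c) / (1 - a) with hT_def
  have hT : 0 ≤ T :=
    div_nonneg (sub_nonneg.2 (hc.trans (by gcongr; exact le_max_left r 0))) ha.le
  have norm_le : ‖x + T • z‖ ≤ ‖x‖ + T :=
    calc ‖x + T • z‖ ≤ ‖x‖ + T * ‖z‖ := by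
          simpa only [norm_smul_of_nonneg hT] using norm_add_le x (T • z)
      _ ≤ ‖x‖ + T := by gcongr; exact mul_le_of_le_one_right hT hz
  have end_le : r * ‖x + T • z‖ - T ≤ c :=
    calc r * ‖x + T • z‖ - T ≤ a * (‖x‖ + T) - T := by
          gcongr
          exact le_max_left r 0
      _ = c := by rw [hT_def]; field_simp; ring
  have le_start : c ≤ r * ‖x + (0 : ℝ) • z‖ - 0 := by simpa using hc
  have hcont : Continuous fun t : ℝ => r * ‖x + t • z‖ - t := by fun_prop
  obtain ⟨t, ht, hteq⟩ := intermediate_value_Icc' hT hcont.continuousOn ⟨end_le, le_start⟩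
  exact ⟨t, ht.1, sub_eq_iff_eq_add.1 hteq⟩

theorem lt_apply_inv_norm_smul_iff {F : Type*} [FunLike F X ℝ] [LinearMapClass F ℝ X ℝ]
    {w : X} {r : ℝ} (g : F) (hw : 0 < ‖w‖) : r < g (‖w‖⁻¹ • w) ↔ r * ‖w‖ < g w := by
  rw [map_smul, smul_eq_mul, inv_mul_eq_div, lt_div_iff₀ hw]

theorem norm_pos_of_mul_norm_lt_apply {w : X} {r : ℝ} {f : X →L[ℝ] ℝ} (h : r * ‖w‖ < f w) :
    0 < ‖w‖ := by
  refine (norm_nonneg w).lt_of_ne' fun hw => ?_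
  have hfw : f w ≤ 0 := by simpa [hw] using (le_abs_self (f w)).trans (f.le_opNorm w)
  rw [hw, mul_zero] at h
  exact hfw.not_gt h

theorem weak_star_subslice_general {x z : X} {f : X →L[ℝ] ℝ} {r c : ℝ} (hz : ‖z‖ ≤ 1)
    (hfz : 1 ≤ f z) (hr : r < 1) (hc : c ≤ r * ‖x‖) (hfx : c < f x) :
    ∃ y : X, ‖y‖ = 1 ∧ r < f y ∧ ∀ g : X →L[ℝ] ℝ, ‖g‖ ≤ 1 → r < g y → c < g x := by
  obtain ⟨t, ht, hteq⟩ := exists_nonneg_mul_norm_add_smul_eq_add hz hr hc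
  have apply_add_smul (g : X →L[ℝ] ℝ) : g (x + t • z) = g x + t * g z := by simp
  have lt_f : r * ‖x + t • z‖ < f (x + t • z) := by
    rw [hteq, apply_add_smul]
    exact add_lt_add_of_lt_of_le hfx (le_mul_of_one_le_right ht hfz)
  have hpos := norm_pos_of_mul_norm_lt_apply lt_f
  refine ⟨‖x + t • z‖⁻¹ • (x + t • z), ?_, (lt_apply_inv_norm_smul_iff f hpos).2 lt_f, ?_⟩
  · rw [norm_smul, norm_inv, norm_norm, inv_mul_cancel₀ hpos.ne']
  · intro g hg hgy
    have hgz : g z ≤ 1 := (le_abs_self _).trans (by simpa using g.le_of_opNorm_le_of_le hg hz)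
    have lt_g : c + t < g x + t * g z := by
      rwa [lt_apply_inv_norm_smul_iff g hpos, hteq, apply_add_smul] at hgy
    linarith [mul_le_of_le_one_right ht hgz]

end

/-- Weak*-version of the Kadets–Ivakhno subslice lemma: if `x ∈ S_X`, `ε > 0`,
`x* ∈ S(x,ε) ∩ S_{X*}` attains its norm, and `0 < δ < ε`, then there exists `y ∈ S_X`
with `x* ∈ S(y,δ)` and `S(y,δ) ⊆ S(x,ε)` (weak* slices of the dual unit ball). -/
theorem weak_star_subslice {X : Type*} [NormedAddCommGroup X] [NormedSpace ℝ X]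
    [CompleteSpace X] (ε : ℝ) (hε : 0 < ε) (x : X) (hx : ‖x‖ = 1)
    (f : X →L[ℝ] ℝ) (hf : ‖f‖ = 1) (hfx : f x > 1 - ε)
    (hattain : ∃ z : X, ‖z‖ = 1 ∧ f z = 1)
    (δ : ℝ) (hδ : 0 < δ) (hδε : δ < ε) :
    ∃ y : X, ‖y‖ = 1 ∧ f y > 1 - δ ∧
      ∀ g : X →L[ℝ] ℝ, ‖g‖ ≤ 1 → g y > 1 - δ → g x > 1 - ε := by
  obtain ⟨z, hz, hfz⟩ := hattain
  exact weak_star_subslice_general hz.le hfz.ge (sub_lt_self 1 hδ) (by rw [hx]; linarith) hfx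
end
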